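/- The multiplication map [A] ⊗ α ⊗ [B] ↦ E_A ⋆ K_α ⋆ F_B defines an isomorphism of C-vector spaces H(A) ⊗_C C[K(R)] ⊗_C H(A) → DH_red(R). -/

import Mathlib

set_option linter.unusedSectionVars false

open CategoryTheory CategoryTheory.Limits Opposite

noncomputable section

universe u

variable (k : Type) [Field k] [Fintype k]
variable (R : Type u) [SmallCategory R] [Abelian R] [Linear k R] [EnoughProjectives R]

/-- The objects `A` of `R` such that `Hom(M, A)` is a finite set for every `M`. -/
def IsFinHom (A : R) : Prop := ∀ M : R, Finite (M ⟶ A)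

/-- The Euler form `⟨M,A⟩ = dim Hom(M,A) - dim Ext¹(M,A)`. -/
def euler (M A : R) : ℤ :=
  (Module.finrank k (M ⟶ A) : ℤ) -
    (Module.finrank k (((_root_.Ext k R 1).obj (op M)).obj A) : ℤ)

/-- The set of relations defining the Grothendieck group of `R`. -/
def sesSet : Set (FreeAbelianGroup R) :=
  {x | ∃ S : ShortComplex R, S.ShortExact ∧
    x = FreeAbelianGroup.of S.X₂ - FreeAbelianGroup.of S.X₁ - FreeAbelianGroup.of S.X₃}

/-- The Grothendieck group `K(R)`. -/
abbrev K0 := FreeAbelianGroup R ⧸ AddSubgroup.closure (sesSet R)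

/-- The class of an object in `K(R)`. -/
def K0.cls (X : R) : K0 R := QuotientAddGroup.mk (FreeAbelianGroup.of X)

/-- The set of relations defining the Grothendieck group of the subcategory `A`. -/
def sesSetA : Set (FreeAbelianGroup {A : R // IsFinHom R A}) :=
  {x | ∃ (S : ShortComplex R) (h1 : IsFinHom R S.X₁) (h2 : IsFinHom R S.X₂)
      (h3 : IsFinHom R S.X₃), S.ShortExact ∧
    x = FreeAbelianGroup.of ⟨S.X₂, h2⟩ - FreeAbelianGroup.of ⟨S.X₁, h1⟩ -
      FreeAbelianGroup.of ⟨S.X₃, h3⟩}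

/-- The Grothendieck group `K(A)`. -/
abbrev KA := FreeAbelianGroup {A : R // IsFinHom R A} ⧸ AddSubgroup.closure (sesSetA R)

/-- The class of an object of `A` in `K(A)`. -/
def KA.cls (A : {A : R // IsFinHom R A}) : KA R := QuotientAddGroup.mk (FreeAbelianGroup.of A)

/-- `R` is hereditary, i.e. of global dimension at most 1. -/
def Hereditary : Prop :=
  ∀ X Y : R, Subsingleton (((_root_.Ext k R 2).obj (op X)).obj Y)

/-- Condition (c): cancellation for projectives. -/
def CondC : Prop :=
  ∀ P Q M : R, Projective P → Projective Q → Projective M →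
    Nonempty ((M ⊞ P) ≅ (M ⊞ Q)) → Nonempty (P ≅ Q)

/-- Condition (d): every element of `K(R)` is a `ℚ`-linear combination of classes of
objects of `A`. -/
def CondD : Prop :=
  ∀ x : K0 R, ∃ n : ℕ, n ≠ 0 ∧ (n : ℤ) • x ∈
    AddSubgroup.closure (Set.range fun A : {A : R // IsFinHom R A} => K0.cls R A.1)

/-- Condition (e). -/
def CondE : Prop :=
  ∀ A B : R, IsFinHom R A → IsFinHom R B → K0.cls R A = K0.cls R B →
    ∀ P : R, Projective P → Nat.card (P ⟶ A) = Nat.card (P ⟶ B)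

structure Z2Cx where
  X0 : R
  X1 : R
  d0 : X0 ⟶ X1
  d1 : X1 ⟶ X0
  d01 : d0 ≫ d1 = 0
  d10 : d1 ≫ d0 = 0

namespace Z2Cx

variable {R}

/-- Morphisms of `ℤ/2`-graded complexes. -/
@[ext] structure Hom (M N : Z2Cx R) where
  f0 : M.X0 ⟶ N.X0
  f1 : M.X1 ⟶ N.X1
  comm0 : M.d0 ≫ f1 = f0 ≫ N.d0
  comm1 : M.d1 ≫ f0 = f1 ≫ N.d1

instance : CategoryStruct (Z2Cx R) where
  Hom := Hom
  id M := ⟨𝟙 _, 𝟙 _, by simp, by simp⟩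
  comp {M N P} f g := ⟨f.f0 ≫ g.f0, f.f1 ≫ g.f1, by
      rw [← Category.assoc, f.comm0, Category.assoc, g.comm0, Category.assoc], by
      rw [← Category.assoc, f.comm1, Category.assoc, g.comm1, Category.assoc]⟩

@[simp] lemma id_f0 (M : Z2Cx R) : (𝟙 M : Hom M M).f0 = 𝟙 M.X0 := rfl
@[simp] lemma id_f1 (M : Z2Cx R) : (𝟙 M : Hom M M).f1 = 𝟙 M.X1 := rfl
@[simp] lemma comp_f0 {M N P : Z2Cx R} (f : M ⟶ N) (g : N ⟶ P) :
    (f ≫ g).f0 = Hom.f0 f ≫ Hom.f0 g := rfl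
@[simp] lemma comp_f1 {M N P : Z2Cx R} (f : M ⟶ N) (g : N ⟶ P) :
    (f ≫ g).f1 = Hom.f1 f ≫ Hom.f1 g := rfl

instance : Category (Z2Cx R) where
  id_comp f := by apply Hom.ext <;> simp
  comp_id f := by apply Hom.ext <;> simp
  assoc f g h := by apply Hom.ext <;> simp

variable (R)

/-- The two-term complex `C_f` associated to a morphism `f`, concentrated so that
`X1 = P`, `X0 = Q`, `d1 = f`, `d0 = 0`. -/
def Cf {P Q : R} (f : P ⟶ Q) : Z2Cx R := ⟨Q, P, 0, f, by simp, by simp⟩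

/-- The shift involution `†`: it interchanges the gradings and negates the differentials. -/
def dagger (M : Z2Cx R) : Z2Cx R :=
  ⟨M.X1, M.X0, -M.d1, -M.d0, by simp [M.d10], by simp [M.d01]⟩

/-- The acyclic complex `K_P` with `d1 = 𝟙 P` and `d0 = 0`. -/
def KP (P : R) : Z2Cx R := ⟨P, P, 0, 𝟙 P, by simp, by simp⟩

/-- Direct sum of `ℤ/2`-graded complexes. -/
def dsum (M N : Z2Cx R) : Z2Cx R where
  X0 := M.X0 ⊞ N.X0
  X1 := M.X1 ⊞ N.X1
  d0 := biprod.map M.d0 N.d0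
  d1 := biprod.map M.d1 N.d1
  d01 := by ext <;> simp [M.d01, N.d01]
  d10 := by ext <;> simp [M.d10, N.d10]

/-- Degree `0` homology of a `ℤ/2`-graded complex. -/
def H0 (M : Z2Cx R) : R := (ShortComplex.mk M.d1 M.d0 M.d10).homology

/-- Degree `1` homology of a `ℤ/2`-graded complex. -/
def H1 (M : Z2Cx R) : R := (ShortComplex.mk M.d0 M.d1 M.d01).homology

/-- The homology complex `H•(M•)`, with zero differentials. -/
def Hcx (M : Z2Cx R) : Z2Cx R := ⟨H0 R M, H1 R M, 0, 0, by simp, by simp⟩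

/-- A complex is acyclic if its homology vanishes. -/
def Acyclic (M : Z2Cx R) : Prop := IsZero (H0 R M) ∧ IsZero (H1 R M)

end Z2Cx

namespace Z2Cx

variable {R}

/-- A short exact sequence of `ℤ/2`-graded complexes, exhibiting an extension of `M` by `N`
(short exactness of a sequence of complexes is componentwise short exactness). -/
structure ExtSES (M N : Z2Cx R) where
  E : Z2Cx R
  i : N ⟶ E
  p : E ⟶ M
  w0 : Hom.f0 i ≫ Hom.f0 p = 0
  w1 : Hom.f1 i ≫ Hom.f1 p = 0
  ex0 : (ShortComplex.mk (Hom.f0 i) (Hom.f0 p) w0).ShortExact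
  ex1 : (ShortComplex.mk (Hom.f1 i) (Hom.f1 p) w1).ShortExact

/-- Equivalence of extensions of complexes. -/
def ExtEquiv (M N : Z2Cx R) (s t : ExtSES M N) : Prop :=
  ∃ φ : s.E ≅ t.E, s.i ≫ φ.hom = t.i ∧ φ.hom ≫ t.p = s.p

/-- The set `Ext¹_{C(R)}(M•, N•)` of equivalence classes of extensions of `M•` by `N•`
in the category of `ℤ/2`-graded complexes over `R`. -/
def ExtCl (M N : Z2Cx R) := Quot (ExtEquiv M N)

end Z2Cx

/-- Complexes of projectives with homology in the subcategory `A`, i.e. objects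
of `C_fin(P)`. -/
def FinCx (M : Z2Cx R) : Prop :=
  Projective M.X0 ∧ Projective M.X1 ∧ IsFinHom R (Z2Cx.H0 R M) ∧ IsFinHom R (Z2Cx.H1 R M)

attribute [local instance] Classical.propDecidable

/-- The class `[M•] = [M₀] - [M₁]` in `K(R)` of a `ℤ/2`-graded complex. -/
def clsOf (M : Z2Cx R) : K0 R := K0.cls R M.X0 - K0.cls R M.X1

/-- Isomorphism of `ℤ/2`-graded complexes, as a relation. -/
def cxRel (M N : Z2Cx R) : Prop := Nonempty (M ≅ N)

/-- Isomorphism classes of `ℤ/2`-graded complexes. -/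
def CxCls := Quot (cxRel R)

/-- The isomorphism class of a complex. -/
def ccls (M : Z2Cx R) : CxCls R := Quot.mk _ M

/-- The isomorphism class of the middle term of an extension class. -/
def extMid {M N : Z2Cx R} : Z2Cx.ExtCl M N → CxCls R :=
  Quot.lift (fun s => ccls R s.E) (fun s t h => by
    obtain ⟨φ, -, -⟩ := h
    exact Quot.sound ⟨φ⟩)

/-- `|Ext¹_{C(R)}(M•,N•)_{P•}|` : the number of extension classes of `M•` by `N•` whose
middle term has isomorphism class `c`. -/
def extCount (M N : Z2Cx R) (c : CxCls R) : ℕ :=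
  Nat.card {x : Z2Cx.ExtCl M N // extMid R x = c}

/-- The `ℚ`-valued extension of the Euler form to `K(R) × K(R)`
(which exists by condition (d)). -/
structure EulerData where
  eQ : K0 R →+ K0 R →+ ℚ
  compat : ∀ (M A : R), IsFinHom R A →
    eQ (K0.cls R M) (K0.cls R A) = euler k R M A

/-- A choice, for every complex of projectives `M•`, of the classes `[M₁⁺]` and `[M₀⁻]`
of the components of the canonical decomposition `M• = M•⁺ ⊕ M•⁻ = C_f ⊕ C_g^†`. -/
structure DecData where
  cplus : Z2Cx R → K0 R
  cminus : Z2Cx R → K0 R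
  spec : ∀ M : Z2Cx R, Projective M.X0 → Projective M.X1 →
    ∃ (P Q P' Q' : R) (f : P ⟶ Q) (g : P' ⟶ Q'),
      Projective P ∧ Projective Q ∧ Projective P' ∧ Projective Q' ∧
      Mono f ∧ Mono g ∧
      Nonempty (M ≅ Z2Cx.dsum R (Z2Cx.Cf R f) (Z2Cx.dagger R (Z2Cx.Cf R g))) ∧
      cplus M = K0.cls R P ∧ cminus M = K0.cls R P'

variable {k R}

/-- `μ(M•,N•) = Σ_{i,j} ⟨[Mᵢ^{ε(j)}], [N_{j+1}^{ε(i)}]⟩`. -/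
def mu (ed : EulerData k R) (dd : DecData R) (M N : Z2Cx R) : ℚ :=
  ed.eQ (K0.cls R M.X0 - dd.cminus M) (dd.cplus N) +
    ed.eQ (dd.cplus M) (K0.cls R N.X1 - dd.cplus N) +
    ed.eQ (dd.cminus M) (K0.cls R N.X0 - dd.cminus N) +
    ed.eQ (K0.cls R M.X1 - dd.cplus M) (dd.cminus N)

/-- `h(M•,N•) = q^{μ(M•,N•)} ⬝ |Hom_{C(R)}(H•(M•), H•(N•))|`. -/
def hVal (ed : EulerData k R) (dd : DecData R) (M N : Z2Cx R) : ℝ :=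
  (Fintype.card k : ℝ) ^ ((mu ed dd M N : ℚ) : ℝ) *
    (Nat.card (Z2Cx.Hcx R M ⟶ Z2Cx.Hcx R N) : ℝ)

/-- The structure constants of the Hall algebra `H(C_fin(P))`:
the coefficient of the basis element `c` in `[M•] ⋆ [N•]`. -/
def hallCoeff (v : ℝ) (ed : EulerData k R) (dd : DecData R) (M N : Z2Cx R)
    (c : CxCls R) : ℂ :=
  (((v ^ (((ed.eQ (K0.cls R M.X0) (K0.cls R N.X0) +
      ed.eQ (K0.cls R M.X1) (K0.cls R N.X1) : ℚ)) : ℝ) *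
    (extCount R M N c : ℝ) / hVal ed dd M N : ℝ)) : ℂ)

variable (k R)

/-- Objects of `C_fin(P)`. -/
def FCx := {M : Z2Cx R // FinCx R M}

/-- Isomorphism classes of objects of `C_fin(P)`. -/
def FCls := Quot (fun M N : FCx R => Nonempty (M.1 ≅ N.1))

/-- The isomorphism class of an object of `C_fin(P)`. -/
def fcls (M : FCx R) : FCls R := Quot.mk _ M

/-- Comparison of isomorphism classes in `C_fin(P)` with isomorphism classes of
arbitrary complexes. -/
def fc2c : FCls R → CxCls R :=
  Quot.lift (fun M => ccls R M.1) (fun _ _ h => Quot.sound h)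

/-- The symmetrized Euler form `(α,β) = ⟨α,β⟩ + ⟨β,α⟩`. -/
def sForm (ed : EulerData k R) (a b : K0 R) : ℚ := ed.eQ a b + ed.eQ b a

open ZeroObject in
/-- The zero complex. -/
def zeroCx : Z2Cx R := ⟨0, 0, 0, 0, by simp, by simp⟩

/-- All the data constituting the localized Hall algebra `DH(R)`:
the Hall algebra `H(C_fin(P))` (a free `ℂ`-module on the isomorphism classes of
`C_fin(P)`, with the Hall multiplication `mulH` determined by the structure constants
`hallCoeff`), and its localization `D` at the classes of acyclic complexes, together
with the elements `K_α ⋆ K_β^† = KK (α, β)` and the canonical map `loc`.  The axioms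
express that `D` is precisely the localization of `H(C_fin(P))` at the classes of
acyclic complexes, with the `ℂ[K(R) × K(R)]`-bimodule structure of the paper. -/
structure DHSetting where
  v : ℝ
  v_pos : 0 < v
  v_sq : v ^ 2 = (Fintype.card k : ℝ)
  ed : EulerData k R
  dd : DecData R
  /-- the Hall multiplication on `H(C_fin(P))` -/
  mulH : ((FCls R) →₀ ℂ) →ₗ[ℂ] ((FCls R) →₀ ℂ) →ₗ[ℂ] ((FCls R) →₀ ℂ)
  mulH_single : ∀ (M N : FCx R) (c : FCls R),
    (mulH (Finsupp.single (fcls R M) 1) (Finsupp.single (fcls R N) 1)) c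
      = hallCoeff v ed dd M.1 N.1 (fc2c R c)
  /-- the carrier of the localized Hall algebra `DH(R)` -/
  D : Type u
  [grp : AddCommGroup D]
  [mod : Module ℂ D]
  /-- the multiplication `⋆` of `DH(R)` -/
  mulD : D →ₗ[ℂ] D →ₗ[ℂ] D
  one : D
  one_mul : ∀ d, mulD one d = d
  mul_one : ∀ d, mulD d one = d
  /-- the canonical map `H(C_fin(P)) → DH(R)` -/
  loc : ((FCls R) →₀ ℂ) →ₗ[ℂ] D
  loc_one : ∀ h : FinCx R (zeroCx R),
    loc (Finsupp.single (fcls R ⟨zeroCx R, h⟩) 1) = one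
  loc_mul : ∀ x y, mulD (loc x) (loc y) = loc (mulH x y)
  /-- the elements `K_α ⋆ K_β^†` -/
  KK : K0 R × K0 R → D
  KK_zero : KK 0 = one
  KK_mul : ∀ a b, mulD (KK a) (KK b) = KK (a + b)
  KK_P : ∀ (P : R), Projective P → ∀ h : FinCx R (Z2Cx.KP R P),
    loc (Finsupp.single (fcls R ⟨Z2Cx.KP R P, h⟩) 1) = KK (K0.cls R P, 0)
  KK_Pd : ∀ (P : R), Projective P → ∀ h : FinCx R (Z2Cx.dagger R (Z2Cx.KP R P)),
    loc (Finsupp.single (fcls R ⟨Z2Cx.dagger R (Z2Cx.KP R P), h⟩) 1) = KK (0, K0.cls R P)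
  /-- the bimodule rule `(K_α ⋆ K_β^†) ⋆ [M•] = v^{(α-β,[M•])} [M•] ⋆ (K_α ⋆ K_β^†)` -/
  comm_rule : ∀ (a b : K0 R) (M : FCx R),
    mulD (KK (a, b)) (loc (Finsupp.single (fcls R M) 1)) =
      (((v ^ ((sForm k R ed (a - b) (clsOf R M.1) : ℚ) : ℝ) : ℝ) : ℂ)) •
        mulD (loc (Finsupp.single (fcls R M) 1)) (KK (a, b))
  /-- multiplication of elements in standard form is induced by the Hall multiplication -/
  mul_general : ∀ (x : (FCls R) →₀ ℂ) (M : FCx R) (a b a' b' : K0 R),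
    mulD (mulD (loc x) (KK (a, b))) (mulD (loc (Finsupp.single (fcls R M) 1)) (KK (a', b'))) =
      (((v ^ ((sForm k R ed (a - b) (clsOf R M.1) : ℚ) : ℝ) : ℝ) : ℂ)) •
        mulD (loc (mulH x (Finsupp.single (fcls R M) 1))) (KK (a + a', b + b'))
  /-- every element of the localization has the standard form `x ⋆ K_α ⋆ K_β^†` -/
  span : ∀ d : D, ∃ (x : (FCls R) →₀ ℂ) (a b : K0 R), d = mulD (loc x) (KK (a, b))
  /-- the kernel of the localization map is exactly the torsion with respect to the
  classes of acyclic complexes -/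
  loc_ker : ∀ x, loc x = 0 ↔ ∃ (K : Z2Cx R) (h : FinCx R K),
    Z2Cx.Acyclic R K ∧ mulH x (Finsupp.single (fcls R ⟨K, h⟩) 1) = 0

attribute [instance] DHSetting.grp DHSetting.mod

variable {k R}

/-- The element `E_{M•} = v^{⟨[M₁⁺]-[M₀⁻],[M•]⟩} K_{-[M₁⁺]} ⋆ K^†_{-[M₀⁻]} ⋆ [M•]`
of the localized Hall algebra. -/
def Eelt (S : DHSetting k R) (M : Z2Cx R) (h : FinCx R M) : S.D :=
  (((S.v ^ ((S.ed.eQ (S.dd.cplus M - S.dd.cminus M) (clsOf R M) : ℚ) : ℝ) : ℝ) : ℂ)) •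
    S.mulD (S.KK (-(S.dd.cplus M), -(S.dd.cminus M)))
      (S.loc (Finsupp.single (fcls R ⟨M, h⟩) 1))

variable (R)

/-- Isomorphism classes of objects of the subcategory `A`. -/
def IsoA := Quot (fun A B : {A : R // IsFinHom R A} => Nonempty (A.1 ≅ B.1))

variable {R}

open TensorProduct

/-- The two-sided ideal of `DH(R)` generated by the elements
`[K_P] ⋆ [K_P^†] - 1 = K_{[P]} ⋆ K^†_{[P]} - 1`, for `P ∈ P`; the reduced localized Hall
algebra is the quotient by this ideal. -/
def redIdeal (S : DHSetting k R) : Submodule ℂ S.D :=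
  Submodule.span ℂ {d : S.D | ∃ (x y : S.D) (P : R), Projective P ∧
    d = S.mulD x (S.mulD (S.KK (K0.cls R P, K0.cls R P) - S.one) y)}

/-- The reduced localized Hall algebra `DH_red(R)`. -/
def DHred (S : DHSetting k R) := S.D ⧸ redIdeal S

instance (S : DHSetting k R) : AddCommGroup (DHred S) := by
  unfold DHred; infer_instance

instance (S : DHSetting k R) : Module ℂ (DHred S) := by
  unfold DHred; infer_instance

/-- The multiplication map `H(A) ⊗ ℂ[K(R)] ⊗ H(A) → DH_red(R)`,
`[A] ⊗ α ⊗ [B] ↦ E_A ⋆ K_α ⋆ F_B`. -/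
def triMap (S : DHSetting k R)
    (rP rQ : R → R) (rf : ∀ C : R, rP C ⟶ rQ C)
    (hfc : ∀ C : R, IsFinHom R C → FinCx R (Z2Cx.Cf R (rf C)))
    (hfcd : ∀ C : R, IsFinHom R C → FinCx R (Z2Cx.dagger R (Z2Cx.Cf R (rf C)))) :
    ((IsoA R →₀ ℂ) ⊗[ℂ] ((K0 R →₀ ℂ) ⊗[ℂ] (IsoA R →₀ ℂ))) →ₗ[ℂ] DHred S :=
  TensorProduct.lift
    ((Finsupp.lift (((K0 R →₀ ℂ) ⊗[ℂ] (IsoA R →₀ ℂ)) →ₗ[ℂ] DHred S) ℂ (IsoA R))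
      fun a => TensorProduct.lift
        ((Finsupp.lift ((IsoA R →₀ ℂ) →ₗ[ℂ] DHred S) ℂ (K0 R))
          fun α => (Finsupp.lift (DHred S) ℂ (IsoA R))
            fun b => Submodule.Quotient.mk
              (S.mulD
                (Eelt S (Z2Cx.Cf R (rf (Quot.out a).1))
                  (hfc (Quot.out a).1 (Quot.out a).2))
                (S.mulD (S.KK (α, 0))
                  (Eelt S (Z2Cx.dagger R (Z2Cx.Cf R (rf (Quot.out b).1)))
                    (hfcd (Quot.out b).1 (Quot.out b).2))))))


section helpers

namespace Z2Cx

/-! ### Additive structure on morphisms of complexes -/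

@[ext] lemma hom_ext' {M N : Z2Cx R} {f g : M ⟶ N} (h0 : Hom.f0 f = Hom.f0 g)
    (h1 : Hom.f1 f = Hom.f1 g) : f = g := Hom.ext h0 h1

def toProd {M N : Z2Cx R} (f : M ⟶ N) : (M.X0 ⟶ N.X0) × (M.X1 ⟶ N.X1) := (Hom.f0 f, Hom.f1 f)

lemma toProd_injective {M N : Z2Cx R} : Function.Injective (toProd (M := M) (N := N)) := by
  intro f g h
  have := Prod.mk.inj h
  exact hom_ext' this.1 this.2

instance {M N : Z2Cx R} : Zero (M ⟶ N) := ⟨⟨0, 0, by simp, by simp⟩⟩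
instance {M N : Z2Cx R} : Add (M ⟶ N) :=
  ⟨fun f g => ⟨Hom.f0 f + Hom.f0 g, Hom.f1 f + Hom.f1 g,
    by simp [Hom.comm0 f, Hom.comm0 g], by simp [Hom.comm1 f, Hom.comm1 g]⟩⟩
instance {M N : Z2Cx R} : Neg (M ⟶ N) :=
  ⟨fun f => ⟨-Hom.f0 f, -Hom.f1 f, by simp [Hom.comm0 f], by simp [Hom.comm1 f]⟩⟩
instance {M N : Z2Cx R} : Sub (M ⟶ N) :=
  ⟨fun f g => ⟨Hom.f0 f - Hom.f0 g, Hom.f1 f - Hom.f1 g,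
    by simp [Hom.comm0 f, Hom.comm0 g], by simp [Hom.comm1 f, Hom.comm1 g]⟩⟩
instance {M N : Z2Cx R} : SMul ℕ (M ⟶ N) :=
  ⟨fun n f => ⟨n • Hom.f0 f, n • Hom.f1 f, by simp [Hom.comm0 f], by simp [Hom.comm1 f]⟩⟩
instance {M N : Z2Cx R} : SMul ℤ (M ⟶ N) :=
  ⟨fun n f => ⟨n • Hom.f0 f, n • Hom.f1 f, by simp [Hom.comm0 f], by simp [Hom.comm1 f]⟩⟩

instance {M N : Z2Cx R} : AddCommGroup (M ⟶ N) :=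
  Function.Injective.addCommGroup toProd toProd_injective rfl (fun _ _ => rfl) (fun _ => rfl)
    (fun _ _ => rfl) (fun _ _ => rfl) (fun _ _ => rfl)

@[simp] lemma zero_f0 {M N : Z2Cx R} : Hom.f0 (0 : M ⟶ N) = 0 := rfl
@[simp] lemma zero_f1 {M N : Z2Cx R} : Hom.f1 (0 : M ⟶ N) = 0 := rfl
@[simp] lemma add_f0 {M N : Z2Cx R} (f g : M ⟶ N) : Hom.f0 (f + g) = Hom.f0 f + Hom.f0 g := rfl
@[simp] lemma add_f1 {M N : Z2Cx R} (f g : M ⟶ N) : Hom.f1 (f + g) = Hom.f1 f + Hom.f1 g := rfl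
@[simp] lemma neg_f0 {M N : Z2Cx R} (f : M ⟶ N) : Hom.f0 (-f) = -Hom.f0 f := rfl
@[simp] lemma neg_f1 {M N : Z2Cx R} (f : M ⟶ N) : Hom.f1 (-f) = -Hom.f1 f := rfl
@[simp] lemma sub_f0 {M N : Z2Cx R} (f g : M ⟶ N) : Hom.f0 (f - g) = Hom.f0 f - Hom.f0 g := rfl
@[simp] lemma sub_f1 {M N : Z2Cx R} (f g : M ⟶ N) : Hom.f1 (f - g) = Hom.f1 f - Hom.f1 g := rfl

instance : Preadditive (Z2Cx R) where
  add_comp _ _ _ f f' g := by ext <;> simp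
  comp_add _ _ _ f g g' := by ext <;> simp

lemma d01_assoc' (M : Z2Cx R) {Z : R} (h : M.X0 ⟶ Z) : M.d0 ≫ M.d1 ≫ h = 0 := by
  rw [← Category.assoc, M.d01, zero_comp]

lemma d10_assoc' (M : Z2Cx R) {Z : R} (h : M.X1 ⟶ Z) : M.d1 ≫ M.d0 ≫ h = 0 := by
  rw [← Category.assoc, M.d10, zero_comp]

/-- The boundary of a homotopy. -/
def bd {M N : Z2Cx R} (h0 : M.X0 ⟶ N.X1) (h1 : M.X1 ⟶ N.X0) : M ⟶ N :=
  ⟨h0 ≫ N.d1 + M.d0 ≫ h1, h1 ≫ N.d0 + M.d1 ≫ h0,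
    by simp [N.d10, d01_assoc'], by simp [N.d01, d10_assoc']⟩

@[simp] lemma bd_f0 {M N : Z2Cx R} (h0 : M.X0 ⟶ N.X1) (h1 : M.X1 ⟶ N.X0) :
    Hom.f0 (bd h0 h1) = h0 ≫ N.d1 + M.d0 ≫ h1 := rfl
@[simp] lemma bd_f1 {M N : Z2Cx R} (h0 : M.X0 ⟶ N.X1) (h1 : M.X1 ⟶ N.X0) :
    Hom.f1 (bd h0 h1) = h1 ≫ N.d0 + M.d1 ≫ h0 := rfl

/-- Null-homotopic maps. -/
def Null (M N : Z2Cx R) : AddSubgroup (M ⟶ N) where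
  carrier := {f | ∃ h0 h1, f = bd h0 h1}
  zero_mem' := ⟨0, 0, by ext <;> simp⟩
  add_mem' := by
    rintro _ _ ⟨h0, h1, rfl⟩ ⟨h0', h1', rfl⟩
    exact ⟨h0 + h0', h1 + h1', by ext <;> simp <;> abel⟩
  neg_mem' := by
    rintro _ ⟨h0, h1, rfl⟩
    exact ⟨-h0, -h1, by ext <;> simp <;> abel⟩

lemma mem_Null {M N : Z2Cx R} {f : M ⟶ N} : f ∈ Null M N ↔ ∃ h0 h1, f = bd h0 h1 := Iff.rfl

lemma bd_comp {M N P : Z2Cx R} (h0 : M.X0 ⟶ N.X1) (h1 : M.X1 ⟶ N.X0) (g : N ⟶ P) :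
    bd h0 h1 ≫ g = bd (h0 ≫ Hom.f1 g) (h1 ≫ Hom.f0 g) := by
  ext <;> simp [Hom.comm0 g, Hom.comm1 g]

lemma comp_bd {M N P : Z2Cx R} (f : M ⟶ N) (h0 : N.X0 ⟶ P.X1) (h1 : N.X1 ⟶ P.X0) :
    f ≫ bd h0 h1 = bd (Hom.f0 f ≫ h0) (Hom.f1 f ≫ h1) := by
  ext <;> simp [← Category.assoc, Hom.comm0 f, Hom.comm1 f]

lemma Null.comp_right {M N P : Z2Cx R} {f : M ⟶ N} (hf : f ∈ Null M N) (g : N ⟶ P) :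
    f ≫ g ∈ Null M P := by
  obtain ⟨h0, h1, rfl⟩ := hf
  exact ⟨_, _, bd_comp _ _ _⟩

lemma Null.comp_left {M N P : Z2Cx R} (f : M ⟶ N) {g : N ⟶ P} (hg : g ∈ Null N P) :
    f ≫ g ∈ Null M P := by
  obtain ⟨h0, h1, rfl⟩ := hg
  exact ⟨_, _, comp_bd _ _ _⟩

/-- Homotopy classes of maps. -/
abbrev Ho (M N : Z2Cx R) := (M ⟶ N) ⧸ Null M N

def postc (X : Z2Cx R) {M N : Z2Cx R} (g : M ⟶ N) : Ho X M →+ Ho X N :=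
  QuotientAddGroup.map _ _ (Preadditive.rightComp X g) (fun _ hf => Null.comp_right hf g)

def prec (Y : Z2Cx R) {M N : Z2Cx R} (f : M ⟶ N) : Ho N Y →+ Ho M Y :=
  QuotientAddGroup.map _ _ (Preadditive.leftComp Y f) (fun _ hg => Null.comp_left f hg)

@[simp] lemma postc_mk (X : Z2Cx R) {M N : Z2Cx R} (g : M ⟶ N) (x : X ⟶ M) :
    postc X g (x : Ho X M) = ((x ≫ g : X ⟶ N) : Ho X N) := rfl
@[simp] lemma prec_mk (Y : Z2Cx R) {M N : Z2Cx R} (f : M ⟶ N) (x : N ⟶ Y) :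
    prec Y f (x : Ho N Y) = ((f ≫ x : M ⟶ Y) : Ho M Y) := rfl

/-! ### Direct sums -/

def inl (M N : Z2Cx R) : M ⟶ dsum R M N := ⟨biprod.inl, biprod.inl, by simp [dsum], by simp [dsum]⟩
def inr (M N : Z2Cx R) : N ⟶ dsum R M N := ⟨biprod.inr, biprod.inr, by simp [dsum], by simp [dsum]⟩
def fst (M N : Z2Cx R) : dsum R M N ⟶ M := ⟨biprod.fst, biprod.fst, by simp [dsum], by simp [dsum]⟩
def snd (M N : Z2Cx R) : dsum R M N ⟶ N := ⟨biprod.snd, biprod.snd, by simp [dsum], by simp [dsum]⟩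

@[simp] lemma inl_fst (M N : Z2Cx R) : inl M N ≫ fst M N = 𝟙 M := hom_ext' biprod.inl_fst biprod.inl_fst
@[simp] lemma inr_snd (M N : Z2Cx R) : inr M N ≫ snd M N = 𝟙 N := hom_ext' biprod.inr_snd biprod.inr_snd
@[simp] lemma inl_snd (M N : Z2Cx R) : inl M N ≫ snd M N = 0 := hom_ext' biprod.inl_snd biprod.inl_snd
@[simp] lemma inr_fst (M N : Z2Cx R) : inr M N ≫ fst M N = 0 := hom_ext' biprod.inr_fst biprod.inr_fst
lemma dsum_total (M N : Z2Cx R) : fst M N ≫ inl M N + snd M N ≫ inr M N = 𝟙 (dsum R M N) := by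
  apply hom_ext'
  · exact biprod.total
  · exact biprod.total

def lift {X M N : Z2Cx R} (f : X ⟶ M) (g : X ⟶ N) : X ⟶ dsum R M N := f ≫ inl M N + g ≫ inr M N
def desc {X M N : Z2Cx R} (f : M ⟶ X) (g : N ⟶ X) : dsum R M N ⟶ X := fst M N ≫ f + snd M N ≫ g

@[simp] lemma lift_fst {X M N : Z2Cx R} (f : X ⟶ M) (g : X ⟶ N) : lift f g ≫ fst M N = f := by
  simp [lift]
@[simp] lemma lift_snd {X M N : Z2Cx R} (f : X ⟶ M) (g : X ⟶ N) : lift f g ≫ snd M N = g := by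
  simp [lift]
@[simp] lemma inl_desc {X M N : Z2Cx R} (f : M ⟶ X) (g : N ⟶ X) : inl M N ≫ desc f g = f := by
  simp only [desc, Preadditive.comp_add, ← Category.assoc]; simp
@[simp] lemma inr_desc {X M N : Z2Cx R} (f : M ⟶ X) (g : N ⟶ X) : inr M N ≫ desc f g = g := by
  simp only [desc, Preadditive.comp_add, ← Category.assoc]; simp

lemma dsum_hom_ext {X M N : Z2Cx R} {f g : X ⟶ dsum R M N} (h1 : f ≫ fst M N = g ≫ fst M N)
    (h2 : f ≫ snd M N = g ≫ snd M N) : f = g := by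
  rw [← Category.comp_id f, ← Category.comp_id g, ← dsum_total]
  simp only [Preadditive.comp_add, ← Category.assoc, h1, h2]

lemma dsum_hom_ext' {X M N : Z2Cx R} {f g : dsum R M N ⟶ X} (h1 : inl M N ≫ f = inl M N ≫ g)
    (h2 : inr M N ≫ f = inr M N ≫ g) : f = g := by
  rw [← Category.id_comp f, ← Category.id_comp g, ← dsum_total]
  simp only [Preadditive.add_comp, Category.assoc, h1, h2]

lemma bijective_post (X M N : Z2Cx R) : Function.Bijective
    (fun x : Ho X (dsum R M N) => (postc X (fst M N) x, postc X (snd M N) x)) := by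
  constructor
  · intro x y h
    obtain ⟨x, rfl⟩ := QuotientAddGroup.mk_surjective x
    obtain ⟨y, rfl⟩ := QuotientAddGroup.mk_surjective y
    simp only [postc_mk, Prod.mk.injEq, QuotientAddGroup.eq] at h ⊢
    rw [← Category.comp_id (-x + y), ← dsum_total]
    have h1 := Null.comp_right h.1 (inl M N)
    have h2 := Null.comp_right h.2 (inr M N)
    convert AddSubgroup.add_mem _ h1 h2 using 1
    simp
  · rintro ⟨x, y⟩
    obtain ⟨x, rfl⟩ := QuotientAddGroup.mk_surjective x
    obtain ⟨y, rfl⟩ := QuotientAddGroup.mk_surjective y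
    exact ⟨(lift x y : X ⟶ _), by simp⟩

lemma bijective_pre (X M N : Z2Cx R) : Function.Bijective
    (fun x : Ho (dsum R M N) X => (prec X (inl M N) x, prec X (inr M N) x)) := by
  constructor
  · intro x y h
    obtain ⟨x, rfl⟩ := QuotientAddGroup.mk_surjective x
    obtain ⟨y, rfl⟩ := QuotientAddGroup.mk_surjective y
    simp only [prec_mk, Prod.mk.injEq, QuotientAddGroup.eq] at h ⊢
    rw [← Category.id_comp (-x + y), ← dsum_total]
    have h1 := Null.comp_left (fst M N) h.1
    have h2 := Null.comp_left (snd M N) h.2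
    convert AddSubgroup.add_mem _ h1 h2 using 1
    simp
    abel
  · rintro ⟨x, y⟩
    obtain ⟨x, rfl⟩ := QuotientAddGroup.mk_surjective x
    obtain ⟨y, rfl⟩ := QuotientAddGroup.mk_surjective y
    exact ⟨(desc x y : _ ⟶ X), by simp⟩

lemma card_post (X M N : Z2Cx R) :
    Nat.card (Ho X (dsum R M N)) = Nat.card (Ho X M) * Nat.card (Ho X N) := by
  rw [← Nat.card_prod]
  exact Nat.card_congr (Equiv.ofBijective _ (bijective_post X M N))

lemma card_pre (X M N : Z2Cx R) :
    Nat.card (Ho (dsum R M N) X) = Nat.card (Ho M X) * Nat.card (Ho N X) := by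
  rw [← Nat.card_prod]
  exact Nat.card_congr (Equiv.ofBijective _ (bijective_pre X M N))

lemma postIso (X : Z2Cx R) {M N : Z2Cx R} (e : M ≅ N) : Nonempty (Ho X M ≃ Ho X N) :=
  ⟨⟨postc X e.hom, postc X e.inv, fun x => by
      obtain ⟨x, rfl⟩ := QuotientAddGroup.mk_surjective x; simp, fun x => by
      obtain ⟨x, rfl⟩ := QuotientAddGroup.mk_surjective x; simp⟩⟩

lemma preIso (X : Z2Cx R) {M N : Z2Cx R} (e : M ≅ N) : Nonempty (Ho M X ≃ Ho N X) :=
  ⟨⟨prec X e.inv, prec X e.hom, fun x => by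
      obtain ⟨x, rfl⟩ := QuotientAddGroup.mk_surjective x; simp, fun x => by
      obtain ⟨x, rfl⟩ := QuotientAddGroup.mk_surjective x; simp⟩⟩

/-- The measure: number of homotopy classes of endomorphisms. -/
def meas (M : Z2Cx R) : ℕ := Nat.card (Ho M M)

lemma meas_iso {M N : Z2Cx R} (e : M ≅ N) : meas M = meas N := by
  obtain ⟨f⟩ := postIso M e
  obtain ⟨g⟩ := preIso N e
  exact Nat.card_congr (f.trans g)

/-- Contractible complexes. -/
def Contr (K : Z2Cx R) : Prop := 𝟙 K ∈ Null K K

lemma Contr.card_post {K : Z2Cx R} (hK : Contr K) (X : Z2Cx R) : Nat.card (Ho X K) = 1 := by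
  rw [Nat.card_eq_one_iff_unique]
  refine ⟨⟨?_⟩, ⟨0⟩⟩
  intro x y
  obtain ⟨x, rfl⟩ := QuotientAddGroup.mk_surjective x
  obtain ⟨y, rfl⟩ := QuotientAddGroup.mk_surjective y
  rw [QuotientAddGroup.eq, ← Category.comp_id (-x + y)]
  exact Null.comp_left _ hK

lemma Contr.card_pre {K : Z2Cx R} (hK : Contr K) (X : Z2Cx R) : Nat.card (Ho K X) = 1 := by
  rw [Nat.card_eq_one_iff_unique]
  refine ⟨⟨?_⟩, ⟨0⟩⟩
  intro x y
  obtain ⟨x, rfl⟩ := QuotientAddGroup.mk_surjective x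
  obtain ⟨y, rfl⟩ := QuotientAddGroup.mk_surjective y
  rw [QuotientAddGroup.eq, ← Category.id_comp (-x + y)]
  exact Null.comp_right hK _

lemma meas_dsum_contr (M : Z2Cx R) {K : Z2Cx R} (hK : Contr K) : meas (dsum R M K) = meas M := by
  unfold meas
  rw [Z2Cx.card_post, Z2Cx.card_pre, Z2Cx.card_pre, hK.card_post, hK.card_post, hK.card_pre]
  simp

lemma Contr.of_iso {K L : Z2Cx R} (hK : Contr K) (e : K ≅ L) : Contr L := by
  have := Null.comp_left e.inv (Null.comp_right hK e.hom)
  simpa [Contr] using this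

lemma Contr.dsum {K L : Z2Cx R} (hK : Contr K) (hL : Contr L) : Contr (dsum R K L) := by
  have h1 := Null.comp_left (fst K L) (Null.comp_right hK (inl K L))
  have h2 := Null.comp_left (snd K L) (Null.comp_right hL (inr K L))
  have := AddSubgroup.add_mem _ h1 h2
  simp only [Category.id_comp, dsum_total] at this
  exact this

lemma contr_KP (P : R) : Contr (KP R P) :=
  ⟨𝟙 P, (0 : P ⟶ P), by
    apply hom_ext'
    · change 𝟙 P = 𝟙 P ≫ 𝟙 P + (0 : P ⟶ P) ≫ (0 : P ⟶ P)
      simp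
    · change 𝟙 P = (0 : P ⟶ P) ≫ (0 : P ⟶ P) + 𝟙 P ≫ 𝟙 P
      simp⟩

lemma Contr.dagger {K : Z2Cx R} (hK : Contr K) : Contr (dagger R K) := by
  obtain ⟨h0, h1, h⟩ := hK
  have e0 := congrArg Hom.f0 h
  have e1 := congrArg Hom.f1 h
  simp only [id_f0, id_f1, bd_f0, bd_f1] at e0 e1
  refine ⟨-h1, -h0, ?_⟩
  ext
  · simp [Z2Cx.dagger, e1]
  · simp [Z2Cx.dagger, e0]

end Z2Cx

namespace Z2Cx

/-! ### Extensions -/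

lemma exists_lift_of_ses {A B C X : R} {f : A ⟶ B} {g : B ⟶ C} {w : f ≫ g = 0}
    (h : (ShortComplex.mk f g w).ShortExact) (x : X ⟶ B) (hx : x ≫ g = 0) : ∃ y : X ⟶ A, y ≫ f = x :=
  ⟨h.fIsKernel.lift (KernelFork.ofι x hx), h.fIsKernel.fac (KernelFork.ofι x hx) WalkingParallelPair.zero⟩

lemma exists_desc_of_ses {A B C X : R} {f : A ⟶ B} {g : B ⟶ C} {w : f ≫ g = 0}
    (h : (ShortComplex.mk f g w).ShortExact) (x : B ⟶ X) (hx : f ≫ x = 0) : ∃ y : C ⟶ X, g ≫ y = x :=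
  ⟨h.gIsCokernel.desc (CokernelCofork.ofπ x hx),
    h.gIsCokernel.fac (CokernelCofork.ofπ x hx) WalkingParallelPair.one⟩

lemma exists_retr_of_ses {A B C : R} {f : A ⟶ B} {g : B ⟶ C} {w : f ≫ g = 0}
    (h : (ShortComplex.mk f g w).ShortExact) (hC : Projective C) : ∃ r : B ⟶ A, f ≫ r = 𝟙 A := by
  have : Projective (ShortComplex.mk f g w).X₃ := hC
  exact ⟨(h.splittingOfProjective).r, (h.splittingOfProjective).f_r⟩

variable {M N : Z2Cx R}

namespace ExtSES

variable (s : ExtSES M N)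

lemma w : s.i ≫ s.p = 0 := hom_ext' s.w0 s.w1

instance : Mono (Hom.f0 s.i) := s.ex0.mono_f
instance : Mono (Hom.f1 s.i) := s.ex1.mono_f
instance : Epi (Hom.f0 s.p) := s.ex0.epi_g
instance : Epi (Hom.f1 s.p) := s.ex1.epi_g

lemma i_cancel {X : Z2Cx R} {f g : X ⟶ N} (h : f ≫ s.i = g ≫ s.i) : f = g := by
  apply hom_ext'
  · rw [← cancel_mono (Hom.f0 s.i)]; exact congrArg Hom.f0 h
  · rw [← cancel_mono (Hom.f1 s.i)]; exact congrArg Hom.f1 h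

lemma p_cancel {X : Z2Cx R} {f g : M ⟶ X} (h : s.p ≫ f = s.p ≫ g) : f = g := by
  apply hom_ext'
  · rw [← cancel_epi (Hom.f0 s.p)]; exact congrArg Hom.f0 h
  · rw [← cancel_epi (Hom.f1 s.p)]; exact congrArg Hom.f1 h

lemma exists_lift {X : Z2Cx R} (x : X ⟶ s.E) (hx : x ≫ s.p = 0) : ∃ y : X ⟶ N, y ≫ s.i = x := by
  obtain ⟨y0, h0⟩ := exists_lift_of_ses s.ex0 (Hom.f0 x) (congrArg Hom.f0 hx)
  obtain ⟨y1, h1⟩ := exists_lift_of_ses s.ex1 (Hom.f1 x) (congrArg Hom.f1 hx)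
  refine ⟨⟨y0, y1, ?_, ?_⟩, hom_ext' h0 h1⟩
  · rw [← cancel_mono (Hom.f1 s.i), Category.assoc, Category.assoc, h1, Hom.comm0 s.i,
      ← Category.assoc, h0, Hom.comm0 x]
  · rw [← cancel_mono (Hom.f0 s.i), Category.assoc, Category.assoc, h0, Hom.comm1 s.i,
      ← Category.assoc, h1, Hom.comm1 x]

lemma exists_desc {X : Z2Cx R} (x : s.E ⟶ X) (hx : s.i ≫ x = 0) : ∃ y : M ⟶ X, s.p ≫ y = x := by
  obtain ⟨y0, h0⟩ := exists_desc_of_ses s.ex0 (Hom.f0 x) (congrArg Hom.f0 hx)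
  obtain ⟨y1, h1⟩ := exists_desc_of_ses s.ex1 (Hom.f1 x) (congrArg Hom.f1 hx)
  refine ⟨⟨y0, y1, ?_, ?_⟩, hom_ext' h0 h1⟩
  · rw [← cancel_epi (Hom.f0 s.p), ← Category.assoc, ← Category.assoc, h0, ← Hom.comm0 s.p,
      Category.assoc, h1, Hom.comm0 x]
  · rw [← cancel_epi (Hom.f1 s.p), ← Category.assoc, ← Category.assoc, h1, ← Hom.comm1 s.p,
      Category.assoc, h0, Hom.comm1 x]

/-- The split extension. -/
def split (M N : Z2Cx R) : ExtSES M N where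
  E := dsum R M N
  i := inr M N
  p := fst M N
  w0 := congrArg Hom.f0 (inr_fst M N)
  w1 := congrArg Hom.f1 (inr_fst M N)
  ex0 := (ShortComplex.Splitting.mk (S := ShortComplex.mk biprod.inr biprod.fst biprod.inr_fst)
    (biprod.snd) (biprod.inl) (by simp) (by simp)
    (by simp [add_comm])).shortExact
  ex1 := (ShortComplex.Splitting.mk (S := ShortComplex.mk biprod.inr biprod.fst biprod.inr_fst)
    (biprod.snd) (biprod.inl) (by simp) (by simp)
    (by simp [add_comm])).shortExact

lemma equiv_split_of_section (σ : M ⟶ s.E) (hσ : σ ≫ s.p = 𝟙 M) : ExtEquiv M N s (split M N) := by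
  obtain ⟨r, hr⟩ := s.exists_lift (𝟙 _ - s.p ≫ σ) (by simp [hσ])
  have h1 : s.i ≫ r = 𝟙 N := s.i_cancel (by
    rw [Category.assoc, hr, Preadditive.comp_sub, ← Category.assoc, s.w]; simp)
  have h2 : σ ≫ r = 0 := s.i_cancel (by
    rw [Category.assoc, hr, Preadditive.comp_sub, ← Category.assoc, hσ]; simp)
  have e1 : Z2Cx.lift s.p r ≫ Z2Cx.desc σ s.i = 𝟙 s.E := by
    rw [Z2Cx.lift, Preadditive.add_comp, Category.assoc, Category.assoc, inl_desc, inr_desc, hr]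
    simp
  have e2 : Z2Cx.desc σ s.i ≫ Z2Cx.lift s.p r = 𝟙 (dsum R M N) := by
    apply dsum_hom_ext'
    · rw [← Category.assoc, inl_desc]
      apply dsum_hom_ext <;> simp [hσ, h2]
    · rw [← Category.assoc, inr_desc]
      apply dsum_hom_ext <;> simp [s.w, h1]
  have e3 : s.i ≫ Z2Cx.lift s.p r = inr M N := by
    apply dsum_hom_ext <;> simp [s.w, h1]
  exact ⟨⟨Z2Cx.lift s.p r, Z2Cx.desc σ s.i, e1, e2⟩, e3, lift_fst _ _⟩

lemma equiv_split_of_retr (r : s.E ⟶ N) (hr : s.i ≫ r = 𝟙 N) : ExtEquiv M N s (split M N) := by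
  obtain ⟨σ, hσ⟩ := s.exists_desc (𝟙 _ - r ≫ s.i) (by simp [← Category.assoc, hr])
  refine s.equiv_split_of_section σ (s.p_cancel ?_)
  rw [← Category.assoc, hσ]
  simp [s.w]

lemma equiv_split_of_contr (hM0 : Projective M.X0) (hM1 : Projective M.X1)
    (hN : Contr N) : ExtEquiv M N s (split M N) := by
  obtain ⟨h0, h1, h⟩ := hN
  obtain ⟨r0, hr0⟩ := exists_retr_of_ses s.ex0 hM0
  obtain ⟨r1, hr1⟩ := exists_retr_of_ses s.ex1 hM1
  refine s.equiv_split_of_retr (bd (r0 ≫ h0) (r1 ≫ h1)) ?_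
  rw [comp_bd, ← Category.assoc, ← Category.assoc, hr0, hr1, h, Category.id_comp, Category.id_comp]

lemma exact_pre (hM0 : Projective M.X0) (hM1 : Projective M.X1) (Y : Z2Cx R) : (prec Y s.p).range = (prec Y s.i).ker := by
  apply le_antisymm
  · rintro _ ⟨x, rfl⟩
    obtain ⟨x, rfl⟩ := QuotientAddGroup.mk_surjective x
    simp [AddMonoidHom.mem_ker, ← Category.assoc, s.w]
  · intro x hx
    obtain ⟨x, rfl⟩ := QuotientAddGroup.mk_surjective x
    rw [AddMonoidHom.mem_ker, prec_mk, QuotientAddGroup.eq_zero_iff] at hx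
    obtain ⟨h0, h1, h⟩ := hx
    obtain ⟨r0, hr0⟩ := exists_retr_of_ses s.ex0 hM0
    obtain ⟨r1, hr1⟩ := exists_retr_of_ses s.ex1 hM1
    obtain ⟨y, hy⟩ := s.exists_desc (x - bd (r0 ≫ h0) (r1 ≫ h1)) (by
      rw [Preadditive.comp_sub, comp_bd, ← Category.assoc, ← Category.assoc, hr0, hr1, h,
        Category.id_comp, Category.id_comp, sub_self])
    refine ⟨(y : M ⟶ Y), ?_⟩
    rw [prec_mk, hy, QuotientAddGroup.eq]
    exact ⟨r0 ≫ h0, r1 ≫ h1, by abel⟩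

lemma exact_post (X : Z2Cx R) (hX0 : Projective X.X0) (hX1 : Projective X.X1) :
    (postc X s.i).range = (postc X s.p).ker := by
  apply le_antisymm
  · rintro _ ⟨x, rfl⟩
    obtain ⟨x, rfl⟩ := QuotientAddGroup.mk_surjective x
    simp [AddMonoidHom.mem_ker, s.w]
  · intro x hx
    obtain ⟨x, rfl⟩ := QuotientAddGroup.mk_surjective x
    rw [AddMonoidHom.mem_ker, postc_mk, QuotientAddGroup.eq_zero_iff] at hx
    obtain ⟨h0, h1, h⟩ := hx
    obtain ⟨y, hy⟩ := s.exists_lift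
      (x - bd (Projective.factorThru h0 (Hom.f1 s.p)) (Projective.factorThru h1 (Hom.f0 s.p))) (by
      rw [Preadditive.sub_comp, bd_comp, Projective.factorThru_comp, Projective.factorThru_comp, h,
        sub_self])
    refine ⟨(y : X ⟶ N), ?_⟩
    rw [postc_mk, hy, QuotientAddGroup.eq]
    exact ⟨_, _, by abel⟩

lemma section_of_surj (hM0 : Projective M.X0) (hM1 : Projective M.X1)
    (h : Function.Surjective (postc M s.p)) : ExtEquiv M N s (split M N) := by
  obtain ⟨x, hx⟩ := h ((𝟙 M : M ⟶ M) : Ho M M)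
  obtain ⟨x, rfl⟩ := QuotientAddGroup.mk_surjective x
  rw [postc_mk, QuotientAddGroup.eq] at hx
  obtain ⟨h0, h1, h⟩ := hx
  refine s.equiv_split_of_section
    (x + bd (Projective.factorThru h0 (Hom.f1 s.p)) (Projective.factorThru h1 (Hom.f0 s.p))) ?_
  rw [Preadditive.add_comp, bd_comp, Projective.factorThru_comp, Projective.factorThru_comp, ← h]
  abel

end ExtSES

lemma card_le_of_exact {A B C : Type*} [AddCommGroup A] [AddCommGroup B] [AddCommGroup C]
    [Finite A] [Finite C] (f : A →+ B) (g : B →+ C) (h : f.range = g.ker) :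
    Finite B ∧ Nat.card B ≤ Nat.card A * Nat.card C ∧
      (¬ Function.Surjective g → Nat.card B < Nat.card A * Nat.card C) := by
  have e1 : Nat.card g.ker ≤ Nat.card A := by
    rw [← h]; exact Nat.card_le_card_of_surjective f.rangeRestrict f.rangeRestrict_surjective
  have : Finite g.ker := by
    rw [← h]; exact Finite.of_surjective f.rangeRestrict f.rangeRestrict_surjective
  have : Finite g.range := inferInstance
  have e2 : Nat.card B = Nat.card (B ⧸ g.ker) * Nat.card g.ker :=
    AddSubgroup.card_eq_card_quotient_mul_card_addSubgroup _
  have e3 : Nat.card (B ⧸ g.ker) = Nat.card g.range :=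
    Nat.card_congr (QuotientAddGroup.quotientKerEquivRange g).toEquiv
  have e4 : Nat.card g.range ≤ Nat.card C := Nat.card_le_card_of_injective _ Subtype.val_injective
  have pA : 0 < Nat.card A := Nat.card_pos
  have pK : 0 < Nat.card g.ker := Nat.card_pos
  have pR : 0 < Nat.card g.range := Nat.card_pos
  rw [e3] at e2
  refine ⟨?_, ?_, ?_⟩
  · have : Nat.card B ≠ 0 := by rw [e2]; positivity
    exact Nat.finite_of_card_ne_zero this
  · rw [e2, mul_comm]; exact Nat.mul_le_mul e1 e4
  · intro hg
    have e5 : Nat.card g.range < Nat.card C := by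
      refine lt_of_le_of_ne e4 fun hEq => hg ?_
      have : Function.Bijective (Subtype.val : g.range → C) := by
        have := Fintype.ofFinite C
        have := Fintype.ofFinite g.range
        rw [Fintype.bijective_iff_injective_and_card]
        exact ⟨Subtype.val_injective, by simpa [Nat.card_eq_fintype_card] using hEq⟩
      intro c
      obtain ⟨⟨_, b, rfl⟩, rfl⟩ := this.2 c
      exact ⟨b, rfl⟩
    rw [e2, mul_comm]
    calc _ ≤ Nat.card A * Nat.card g.range := Nat.mul_le_mul_right _ e1
      _ < _ := Nat.mul_lt_mul_of_pos_left e5 pA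

/-- Key lemma: a non-split extension has strictly smaller measure than the split one. -/
lemma ExtSES.meas_lt (s : ExtSES M N)
    (hM0 : Projective M.X0) (hM1 : Projective M.X1) (hN0 : Projective N.X0) (hN1 : Projective N.X1)
    [Finite (Ho M M)] [Finite (Ho M N)] [Finite (Ho N M)] [Finite (Ho N N)]
    (hs : ¬ ExtEquiv M N s (ExtSES.split M N)) : meas s.E < meas (dsum R M N) := by
  obtain ⟨f1, -, b1⟩ := card_le_of_exact _ _ (s.exact_post M hM0 hM1)
  obtain ⟨f2, b2, -⟩ := card_le_of_exact _ _ (s.exact_post N hN0 hN1)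
  obtain ⟨-, b3, -⟩ := card_le_of_exact _ _ (s.exact_pre hM0 hM1 s.E)
  have b1 := b1 (fun h => hs (s.section_of_surj hM0 hM1 h))
  unfold meas
  rw [card_post, card_pre, card_pre]
  have p : 0 < Nat.card (Ho N N) * Nat.card (Ho N M) := Nat.mul_pos Nat.card_pos Nat.card_pos
  calc _ ≤ _ := b3
    _ ≤ Nat.card (Ho M s.E) * (Nat.card (Ho N N) * Nat.card (Ho N M)) := Nat.mul_le_mul_left _ b2
    _ < (Nat.card (Ho M N) * Nat.card (Ho M M)) * (Nat.card (Ho N N) * Nat.card (Ho N M)) :=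
      Nat.mul_lt_mul_of_pos_right b1 p
    _ = _ := by ring

end Z2Cx

/-! ### Homology -/

lemma IsFinHom.of_iso {A B : R} (hA : IsFinHom R A) (e : A ≅ B) : IsFinHom R B := fun M =>
  have := hA M
  Finite.of_injective (fun f : M ⟶ B => f ≫ e.inv) (fun f g h => by simpa using h)

lemma IsFinHom.biprod {A B : R} (hA : IsFinHom R A) (hB : IsFinHom R B) : IsFinHom R (A ⊞ B) :=
  fun M => by
    have := hA M
    have := hB M
    refine Finite.of_injective
      (fun f : M ⟶ A ⊞ B => ((f ≫ biprod.fst, f ≫ biprod.snd) : (M ⟶ A) × (M ⟶ B))) ?_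
    intro f g h
    have := Prod.mk.inj h
    exact biprod.hom_ext _ _ this.1 this.2

lemma IsFinHom.of_isZero {A : R} (hA : IsZero A) : IsFinHom R A := fun M => by
  have : Subsingleton (M ⟶ A) := ⟨fun f g => hA.eq_of_tgt f g⟩
  infer_instance

namespace Z2Cx

open ZeroObject

abbrev sc0 (M : Z2Cx R) : ShortComplex R := ShortComplex.mk M.d1 M.d0 M.d10
abbrev sc1 (M : Z2Cx R) : ShortComplex R := ShortComplex.mk M.d0 M.d1 M.d01

def sc0map {M N : Z2Cx R} (f : M ⟶ N) : sc0 M ⟶ sc0 N :=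
  ⟨Hom.f1 f, Hom.f0 f, Hom.f1 f, (Hom.comm1 f).symm, (Hom.comm0 f).symm⟩
def sc1map {M N : Z2Cx R} (f : M ⟶ N) : sc1 M ⟶ sc1 N :=
  ⟨Hom.f0 f, Hom.f1 f, Hom.f0 f, (Hom.comm0 f).symm, (Hom.comm1 f).symm⟩

/-- Homology in degree 0 as a functor. -/
def H0F : Z2Cx R ⥤ R where
  obj M := H0 R M
  map f := ShortComplex.homologyMap (sc0map f)
  map_id M := ShortComplex.homologyMap_id (sc0 M)
  map_comp f g := ShortComplex.homologyMap_comp (sc0map f) (sc0map g)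

/-- Homology in degree 1 as a functor. -/
def H1F : Z2Cx R ⥤ R where
  obj M := H1 R M
  map f := ShortComplex.homologyMap (sc1map f)
  map_id M := ShortComplex.homologyMap_id (sc1 M)
  map_comp f g := ShortComplex.homologyMap_comp (sc1map f) (sc1map g)

instance : (H0F (R := R)).Additive where
  map_add {_ _ f g} := ShortComplex.homologyMap_add (sc0map f) (sc0map g)
instance : (H1F (R := R)).Additive where
  map_add {_ _ f g} := ShortComplex.homologyMap_add (sc1map f) (sc1map g)

def addIso (F : Z2Cx R ⥤ R) [F.Additive] (M N : Z2Cx R) : F.obj (dsum R M N) ≅ F.obj M ⊞ F.obj N where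
  hom := biprod.lift (F.map (fst M N)) (F.map (snd M N))
  inv := biprod.desc (F.map (inl M N)) (F.map (inr M N))
  hom_inv_id := by
    rw [biprod.lift_desc, ← F.map_comp, ← F.map_comp, ← F.map_add, dsum_total, F.map_id]
  inv_hom_id := by
    ext <;> simp [← F.map_comp, -Functor.map_comp]

def H0iso (M N : Z2Cx R) : H0 R (dsum R M N) ≅ H0 R M ⊞ H0 R N := addIso H0F M N
def H1iso (M N : Z2Cx R) : H1 R (dsum R M N) ≅ H1 R M ⊞ H1 R N := addIso H1F M N
def H0map {M N : Z2Cx R} (e : M ≅ N) : H0 R M ≅ H0 R N := H0F.mapIso e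
def H1map {M N : Z2Cx R} (e : M ≅ N) : H1 R M ≅ H1 R N := H1F.mapIso e

lemma H0_isZero {M : Z2Cx R} (h1 : M.d1 = 0) (h0 : Mono M.d0) : IsZero (H0 R M) := by
  have := (ShortComplex.exact_iff_mono (sc0 M) h1).2 h0
  exact ShortComplex.exact_iff_isZero_homology _ |>.1 this

lemma H1_isZero {M : Z2Cx R} (h1 : M.d0 = 0) (h0 : Mono M.d1) : IsZero (H1 R M) := by
  have := (ShortComplex.exact_iff_mono (sc1 M) h1).2 h0
  exact ShortComplex.exact_iff_isZero_homology _ |>.1 this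

lemma H0_coker {M : Z2Cx R} (h0 : M.d0 = 0) {A : R} {π : M.X0 ⟶ A} {w : M.d1 ≫ π = 0}
    (h : (ShortComplex.mk M.d1 π w).ShortExact) : Nonempty (H0 R M ≅ A) :=
  ⟨(ShortComplex.HomologyData.ofIsColimitCokernelCofork (sc0 M) h0 (CokernelCofork.ofπ π w)
    h.gIsCokernel).left.homologyIso⟩

lemma H1_coker {M : Z2Cx R} (h0 : M.d1 = 0) {A : R} {π : M.X1 ⟶ A} {w : M.d0 ≫ π = 0}
    (h : (ShortComplex.mk M.d0 π w).ShortExact) : Nonempty (H1 R M ≅ A) :=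
  ⟨(ShortComplex.HomologyData.ofIsColimitCokernelCofork (sc1 M) h0 (CokernelCofork.ofπ π w)
    h.gIsCokernel).left.homologyIso⟩

lemma ses_neg {A B C : R} {f : A ⟶ B} {g : B ⟶ C} {w : f ≫ g = 0}
    (h : (ShortComplex.mk f g w).ShortExact) :
    (ShortComplex.mk (-f) g (by simp [w])).ShortExact := by
  refine ShortComplex.shortExact_of_iso (ShortComplex.isoMk
    (S₁ := ShortComplex.mk f g w) (S₂ := ShortComplex.mk (-f) g (by simp [w]))
    ⟨-𝟙 A, -𝟙 A, by simp, by simp⟩ (Iso.refl _) (Iso.refl _) (by simp) (by simp)) h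

lemma ses_coker {P Q : R} (f : P ⟶ Q) [Mono f] :
    (ShortComplex.mk f (cokernel.π f) (cokernel.condition f)).ShortExact where
  exact := ShortComplex.exact_cokernel f
  mono_f := inferInstance
  epi_g := inferInstance

/-- Maps into such complexes are null-homotopic if they vanish in the cokernel. -/
lemma null_of_d0 {N M : Z2Cx R} (h0 : N.d0 = 0) {A : R} {π : N.X0 ⟶ A} {w : N.d1 ≫ π = 0}
    (h : (ShortComplex.mk N.d1 π w).ShortExact)
    (x : M ⟶ N) (hx : Hom.f0 x ≫ π = 0) : x ∈ Null M N := by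
  obtain ⟨y, hy⟩ := exists_lift_of_ses h (Hom.f0 x) hx
  have : Mono N.d1 := h.mono_f
  refine ⟨y, 0, hom_ext' ?_ ?_⟩
  · simp [hy]
  · rw [bd_f1, zero_comp, zero_add, ← cancel_mono N.d1, Category.assoc, hy, Hom.comm1 x]

lemma null_of_d1 {N M : Z2Cx R} (h0 : N.d1 = 0) {A : R} {π : N.X1 ⟶ A} {w : N.d0 ≫ π = 0}
    (h : (ShortComplex.mk N.d0 π w).ShortExact)
    (x : M ⟶ N) (hx : Hom.f1 x ≫ π = 0) : x ∈ Null M N := by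
  obtain ⟨y, hy⟩ := exists_lift_of_ses h (Hom.f1 x) hx
  have : Mono N.d0 := h.mono_f
  refine ⟨0, y, hom_ext' ?_ ?_⟩
  · rw [bd_f0, zero_comp, zero_add, ← cancel_mono N.d0, Category.assoc, hy, Hom.comm0 x]
  · simp [hy]

lemma finite_of_d0 {N M : Z2Cx R} (h0 : N.d0 = 0) {A : R} {π : N.X0 ⟶ A} {w : N.d1 ≫ π = 0}
    (h : (ShortComplex.mk N.d1 π w).ShortExact) (hA : IsFinHom R A) : Finite (Ho M N) := by
  have := hA M.X0
  refine Finite.of_injective (fun x : Ho M N => (Hom.f0 (Quotient.out x : M ⟶ N) ≫ π : M.X0 ⟶ A)) ?_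
  intro x y hxy
  rw [← QuotientAddGroup.out_eq' x, ← QuotientAddGroup.out_eq' y, QuotientAddGroup.eq]
  refine null_of_d0 h0 h _ ?_
  have : Hom.f0 (Quotient.out x : M ⟶ N) ≫ π = Hom.f0 (Quotient.out y : M ⟶ N) ≫ π := hxy
  rw [add_f0, neg_f0, Preadditive.add_comp, Preadditive.neg_comp, this]
  simp

lemma finite_of_d1 {N M : Z2Cx R} (h0 : N.d1 = 0) {A : R} {π : N.X1 ⟶ A} {w : N.d0 ≫ π = 0}
    (h : (ShortComplex.mk N.d0 π w).ShortExact) (hA : IsFinHom R A) : Finite (Ho M N) := by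
  have := hA M.X1
  refine Finite.of_injective (fun x : Ho M N => (Hom.f1 (Quotient.out x : M ⟶ N) ≫ π : M.X1 ⟶ A)) ?_
  intro x y hxy
  rw [← QuotientAddGroup.out_eq' x, ← QuotientAddGroup.out_eq' y, QuotientAddGroup.eq]
  refine null_of_d1 h0 h _ ?_
  have : Hom.f1 (Quotient.out x : M ⟶ N) ≫ π = Hom.f1 (Quotient.out y : M ⟶ N) ≫ π := hxy
  rw [add_f1, neg_f1, Preadditive.add_comp, Preadditive.neg_comp, this]
  simp

section res
variable {P Q A : R} {f : P ⟶ Q} {π : Q ⟶ A} {w : f ≫ π = 0}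

lemma H0_Cf (h : (ShortComplex.mk f π w).ShortExact) : Nonempty (H0 R (Cf R f) ≅ A) :=
  H0_coker (M := Cf R f) rfl h
lemma H1_Cf (h : (ShortComplex.mk f π w).ShortExact) : IsZero (H1 R (Cf R f)) :=
  H1_isZero (M := Cf R f) rfl h.mono_f
lemma H1_dCf (h : (ShortComplex.mk f π w).ShortExact) : Nonempty (H1 R (dagger R (Cf R f)) ≅ A) :=
  H1_coker (M := dagger R (Cf R f)) neg_zero (ses_neg h)
lemma H0_dCf (h : (ShortComplex.mk f π w).ShortExact) : IsZero (H0 R (dagger R (Cf R f))) :=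
  H0_isZero (M := dagger R (Cf R f)) neg_zero (ses_neg h).mono_f

lemma contr_Cf (h : (ShortComplex.mk f π w).ShortExact) (hA : IsZero A) : Contr (Cf R f) :=
  null_of_d0 (N := Cf R f) rfl h _ (hA.eq_of_tgt _ _)
lemma contr_dCf (h : (ShortComplex.mk f π w).ShortExact) (hA : IsZero A) :
    Contr (dagger R (Cf R f)) :=
  null_of_d1 (N := dagger R (Cf R f)) neg_zero (ses_neg h) _ (hA.eq_of_tgt _ _)

lemma finite_Ho_Cf (h : (ShortComplex.mk f π w).ShortExact) (hA : IsFinHom R A) (M : Z2Cx R) :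
    Finite (Ho M (Cf R f)) := finite_of_d0 (N := Cf R f) rfl h hA
lemma finite_Ho_dCf (h : (ShortComplex.mk f π w).ShortExact) (hA : IsFinHom R A) (M : Z2Cx R) :
    Finite (Ho M (dagger R (Cf R f))) :=
  finite_of_d1 (N := dagger R (Cf R f)) neg_zero (ses_neg h) hA

end res

/-! ### Finiteness of complexes -/

lemma _root_.FinCx.of_iso {M N : Z2Cx R} (hM : FinCx R M) (e : M ≅ N) : FinCx R N := by
  obtain ⟨h0, h1, h2, h3⟩ := hM
  let e0 : M.X0 ≅ N.X0 := ⟨Hom.f0 e.hom, Hom.f0 e.inv, congrArg Hom.f0 e.hom_inv_id,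
    congrArg Hom.f0 e.inv_hom_id⟩
  let e1 : M.X1 ≅ N.X1 := ⟨Hom.f1 e.hom, Hom.f1 e.inv, congrArg Hom.f1 e.hom_inv_id,
    congrArg Hom.f1 e.inv_hom_id⟩
  exact ⟨Projective.of_iso e0 h0, Projective.of_iso e1 h1, h2.of_iso (H0map e), h3.of_iso (H1map e)⟩

lemma _root_.FinCx.dsum {M N : Z2Cx R} (hM : FinCx R M) (hN : FinCx R N) : FinCx R (dsum R M N) := by
  obtain ⟨h0, h1, h2, h3⟩ := hM
  obtain ⟨h0', h1', h2', h3'⟩ := hN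
  refine ⟨?_, ?_, (h2.biprod h2').of_iso (H0iso M N).symm, (h3.biprod h3').of_iso (H1iso M N).symm⟩
  · change Projective (M.X0 ⊞ N.X0); infer_instance
  · change Projective (M.X1 ⊞ N.X1); infer_instance

lemma ses_id (P : R) : (ShortComplex.mk (𝟙 P) (0 : P ⟶ (0 : R)) comp_zero).ShortExact where
  exact := (ShortComplex.exact_iff_epi _ rfl).2 (by dsimp; infer_instance)
  mono_f := by dsimp; infer_instance
  epi_g := by dsimp; infer_instance

lemma KP_eq (P : R) : KP R P = Cf R (𝟙 P) := rfl

lemma finCx_KP (P : R) (hP : Projective P) : FinCx R (KP R P) := by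
  rw [KP_eq]
  obtain ⟨e⟩ := H0_Cf (ses_id P)
  exact ⟨hP, hP, (IsFinHom.of_isZero (isZero_zero R)).of_iso e.symm, IsFinHom.of_isZero (H1_Cf (ses_id P))⟩

lemma finCx_dKP (P : R) (hP : Projective P) : FinCx R (dagger R (KP R P)) := by
  rw [KP_eq]
  obtain ⟨e⟩ := H1_dCf (ses_id P)
  exact ⟨hP, hP, IsFinHom.of_isZero (H0_dCf (ses_id P)),
    (IsFinHom.of_isZero (isZero_zero R)).of_iso e.symm⟩

lemma H0_KP (P : R) : IsZero (H0 R (KP R P)) := by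
  obtain ⟨e⟩ := H0_Cf (ses_id P)
  exact (isZero_zero R).of_iso e
lemma H1_KP (P : R) : IsZero (H1 R (KP R P)) := H1_Cf (ses_id P)
lemma H0_dKP (P : R) : IsZero (H0 R (dagger R (KP R P))) := H0_dCf (ses_id P)
lemma H1_dKP (P : R) : IsZero (H1 R (dagger R (KP R P))) := by
  obtain ⟨e⟩ := H1_dCf (ses_id P)
  exact (isZero_zero R).of_iso e

end Z2Cx

/-! ### Classes in the Grothendieck group -/

lemma cls_ses {A B C : R} {f : A ⟶ B} {g : B ⟶ C} {w : f ≫ g = 0}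
    (h : (ShortComplex.mk f g w).ShortExact) : K0.cls R B = K0.cls R A + K0.cls R C := by
  have : (FreeAbelianGroup.of B - FreeAbelianGroup.of A - FreeAbelianGroup.of C) ∈
      AddSubgroup.closure (sesSet R) := AddSubgroup.subset_closure ⟨_, h, rfl⟩
  have h2 := (QuotientAddGroup.eq_zero_iff (N := AddSubgroup.closure (sesSet R)) _).2 this
  have h3 : K0.cls R B - K0.cls R A - K0.cls R C = 0 := h2
  rw [sub_sub, sub_eq_zero] at h3
  exact h3

lemma cls_isZero {A : R} (hA : IsZero A) : K0.cls R A = 0 := by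
  have h : (ShortComplex.mk (0 : A ⟶ A) (0 : A ⟶ A) comp_zero).ShortExact :=
    { exact := ShortComplex.exact_of_isZero_X₂ _ hA
      mono_f := ⟨fun _ _ _ => hA.eq_of_tgt _ _⟩
      epi_g := ⟨fun _ _ _ => hA.eq_of_src _ _⟩ }
  have := cls_ses h
  simpa using this

open ZeroObject in
lemma cls_iso {A B : R} (e : A ≅ B) : K0.cls R A = K0.cls R B := by
  have h : (ShortComplex.mk e.hom (0 : B ⟶ (0 : R)) comp_zero).ShortExact :=
    { exact := (ShortComplex.exact_iff_epi _ rfl).2 (by dsimp; infer_instance)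
      mono_f := by dsimp; infer_instance
      epi_g := by dsimp; infer_instance }
  have := cls_ses h
  rw [cls_isZero (isZero_zero R), add_zero] at this
  exact this.symm

lemma cls_biprod (A B : R) : K0.cls R (A ⊞ B) = K0.cls R A + K0.cls R B := by
  have h : (ShortComplex.mk (biprod.inl : A ⟶ A ⊞ B) biprod.snd biprod.inl_snd).ShortExact :=
    (ShortComplex.Splitting.ofHasBinaryBiproduct A B).shortExact
  exact cls_ses h

namespace Z2Cx

/-! ### The monoid of isomorphism classes of complexes -/

lemma iso_dsum {M M' N N' : Z2Cx R} (e : M ≅ M') (e' : N ≅ N') :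
    Nonempty (dsum R M N ≅ dsum R M' N') :=
  ⟨{ hom := lift (fst M N ≫ e.hom) (snd M N ≫ e'.hom)
     inv := lift (fst M' N' ≫ e.inv) (snd M' N' ≫ e'.inv)
     hom_inv_id := by
      apply dsum_hom_ext
      · rw [Category.assoc, lift_fst, ← Category.assoc, lift_fst]; simp
      · rw [Category.assoc, lift_snd, ← Category.assoc, lift_snd]; simp
     inv_hom_id := by
      apply dsum_hom_ext
      · rw [Category.assoc, lift_fst, ← Category.assoc, lift_fst]; simp
      · rw [Category.assoc, lift_snd, ← Category.assoc, lift_snd]; simp }⟩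

lemma iso_comm (M N : Z2Cx R) : Nonempty (dsum R M N ≅ dsum R N M) :=
  ⟨{ hom := lift (snd M N) (fst M N)
     inv := lift (snd N M) (fst N M)
     hom_inv_id := by apply dsum_hom_ext <;> simp
     inv_hom_id := by apply dsum_hom_ext <;> simp }⟩

lemma iso_assoc (M N P : Z2Cx R) : Nonempty (dsum R (dsum R M N) P ≅ dsum R M (dsum R N P)) :=
  ⟨{ hom := lift (fst _ _ ≫ fst _ _) (lift (fst _ _ ≫ snd _ _) (snd _ _))
     inv := lift (lift (fst _ _) (snd _ _ ≫ fst _ _)) (snd _ _ ≫ snd _ _)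
     hom_inv_id := by
      apply dsum_hom_ext
      · apply dsum_hom_ext
        · simp only [Category.assoc, lift_fst, Category.id_comp]
        · simp only [Category.assoc, lift_fst, lift_snd, Category.id_comp]
          rw [← Category.assoc, lift_snd, lift_fst]
      · simp only [Category.assoc, lift_snd, Category.id_comp]
        rw [← Category.assoc, lift_snd, lift_snd]
     inv_hom_id := by
      apply dsum_hom_ext
      · simp only [Category.assoc, lift_fst, Category.id_comp]
        rw [← Category.assoc, lift_fst, lift_fst]
      · apply dsum_hom_ext
        · simp only [Category.assoc, lift_fst, lift_snd, Category.id_comp]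
          rw [← Category.assoc, lift_fst, lift_snd]
        · simp only [Category.assoc, lift_snd, Category.id_comp] }⟩

lemma hom_zeroCx_eq {M : Z2Cx R} (f g : M ⟶ zeroCx R) : f = g :=
  hom_ext' ((isZero_zero R).eq_of_tgt _ _) ((isZero_zero R).eq_of_tgt _ _)

lemma iso_zero (M : Z2Cx R) : Nonempty (dsum R M (zeroCx R) ≅ M) :=
  ⟨{ hom := fst _ _
     inv := lift (𝟙 M) 0
     hom_inv_id := by
      apply dsum_hom_ext
      · simp
      · exact hom_zeroCx_eq _ _
     inv_hom_id := by simp }⟩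

/-- Isomorphism classes of complexes. -/
def IC (R : Type u) [SmallCategory R] [Abelian R] : Type u :=
  Quotient (isIsomorphicSetoid (Z2Cx R))

def ic (M : Z2Cx R) : IC R := Quotient.mk (isIsomorphicSetoid (Z2Cx R)) M

lemma ic_eq {M N : Z2Cx R} : ic M = ic N ↔ Nonempty (M ≅ N) :=
  Quotient.eq (r := isIsomorphicSetoid (Z2Cx R))

def icAdd : IC R → IC R → IC R := Quotient.map₂ (fun M N => dsum R M N)
  (fun _ _ ⟨e⟩ _ _ ⟨e'⟩ => iso_dsum e e')

instance : Add (IC R) := ⟨icAdd⟩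
instance : Zero (IC R) := ⟨ic (zeroCx R)⟩

instance : AddCommMonoid (IC R) where
  add_assoc := by
    rintro ⟨a⟩ ⟨b⟩ ⟨c⟩
    exact ic_eq.2 (iso_assoc a b c)
  add_comm := by
    rintro ⟨a⟩ ⟨b⟩
    exact ic_eq.2 (iso_comm a b)
  add_zero := by
    rintro ⟨a⟩
    exact ic_eq.2 (iso_zero a)
  zero_add := by
    rintro ⟨a⟩
    exact (ic_eq.2 (iso_comm _ a)).trans (ic_eq.2 (iso_zero a))
  nsmul := nsmulRec

lemma ic_dsum (M N : Z2Cx R) : ic (dsum R M N) = ic M + ic N := rfl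
lemma ic_zero : ic (zeroCx R) = 0 := rfl

/-! ### dagger -/

def daggerIso {M N : Z2Cx R} (e : M ≅ N) : dagger R M ≅ dagger R N where
  hom := ⟨Hom.f1 e.hom, Hom.f0 e.hom, by
      simpa [dagger] using Hom.comm1 e.hom, by simpa [dagger] using Hom.comm0 e.hom⟩
  inv := ⟨Hom.f1 e.inv, Hom.f0 e.inv, by
      simpa [dagger] using Hom.comm1 e.inv, by simpa [dagger] using Hom.comm0 e.inv⟩
  hom_inv_id := hom_ext' (congrArg Hom.f1 e.hom_inv_id) (congrArg Hom.f0 e.hom_inv_id)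
  inv_hom_id := hom_ext' (congrArg Hom.f1 e.inv_hom_id) (congrArg Hom.f0 e.inv_hom_id)

lemma dagger_dsum (M N : Z2Cx R) : Nonempty (dagger R (dsum R M N) ≅ dsum R (dagger R M) (dagger R N)) := by
  refine ⟨⟨⟨𝟙 _, 𝟙 _, ?_, ?_⟩, ⟨𝟙 _, 𝟙 _, ?_, ?_⟩,
    hom_ext' (Category.id_comp _) (Category.id_comp _),
    hom_ext' (Category.id_comp _) (Category.id_comp _)⟩⟩
  · refine (Category.comp_id _).trans (Eq.trans ?_ (Category.id_comp _).symm)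
    change -(biprod.map M.d1 N.d1) = biprod.map (-M.d1) (-N.d1)
    ext <;> simp
  · refine (Category.comp_id _).trans (Eq.trans ?_ (Category.id_comp _).symm)
    change -(biprod.map M.d0 N.d0) = biprod.map (-M.d0) (-N.d0)
    ext <;> simp
  · refine (Category.comp_id _).trans (Eq.trans ?_ (Category.id_comp _).symm)
    change biprod.map (-M.d1) (-N.d1) = -(biprod.map M.d1 N.d1)
    ext <;> simp
  · refine (Category.comp_id _).trans (Eq.trans ?_ (Category.id_comp _).symm)
    change biprod.map (-M.d0) (-N.d0) = -(biprod.map M.d0 N.d0)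
    ext <;> simp

/-! ### Schanuel -/

lemma iso_of_mono {M N : Z2Cx R} (hM0 : M.d0 = 0) (hN0 : N.d0 = 0) (hM : Mono M.d1) (hN : Mono N.d1)
    (e0 : M.X0 ≅ N.X0) (a : M.X1 ⟶ N.X1) (ha : a ≫ N.d1 = M.d1 ≫ e0.hom)
    (b : N.X1 ⟶ M.X1) (hb : b ≫ M.d1 = N.d1 ≫ e0.inv) : Nonempty (M ≅ N) := by
  refine ⟨{ hom := ⟨e0.hom, a, by simp [hM0, hN0], ha.symm⟩
            inv := ⟨e0.inv, b, by simp [hM0, hN0], hb.symm⟩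
            hom_inv_id := hom_ext' e0.hom_inv_id ?_
            inv_hom_id := hom_ext' e0.inv_hom_id ?_ }⟩
  · change a ≫ b = 𝟙 _
    rw [← cancel_mono M.d1, Category.assoc, hb, ← Category.assoc, ha]; simp
  · change b ≫ a = 𝟙 _
    rw [← cancel_mono N.d1, Category.assoc, ha, ← Category.assoc, hb]; simp

lemma schanuel {P Q A P' Q' A' : R} {f : P ⟶ Q} {π : Q ⟶ A} {w : f ≫ π = 0}
    {f' : P' ⟶ Q'} {π' : Q' ⟶ A'} {w' : f' ≫ π' = 0}
    (h : (ShortComplex.mk f π w).ShortExact) (h' : (ShortComplex.mk f' π' w').ShortExact)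
    (e : A ≅ A') (hQ : Projective Q) (hQ' : Projective Q') :
    Nonempty (dsum R (Cf R f) (KP R Q') ≅ dsum R (KP R Q) (Cf R f')) := by
  have : Mono f := h.mono_f
  have : Mono f' := h'.mono_f
  have : Epi π := h.epi_g
  have : Epi π' := h'.epi_g
  obtain ⟨a, ha⟩ : ∃ a : Q ⟶ Q', a ≫ π' = π ≫ e.hom :=
    ⟨Projective.factorThru (π ≫ e.hom) π', Projective.factorThru_comp _ _⟩
  obtain ⟨b, hb⟩ : ∃ b : Q' ⟶ Q, b ≫ π = π' ≫ e.inv :=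
    ⟨Projective.factorThru (π' ≫ e.inv) π, Projective.factorThru_comp _ _⟩
  let e0 : Q ⊞ Q' ≅ Q ⊞ Q' :=
    { hom := biprod.lift (biprod.fst - biprod.snd ≫ b)
        (biprod.snd + (biprod.fst - biprod.snd ≫ b) ≫ a)
      inv := biprod.lift (biprod.fst + (biprod.snd - biprod.fst ≫ a) ≫ b)
        (biprod.snd - biprod.fst ≫ a)
      hom_inv_id := by ext <;> simp
      inv_hom_id := by ext <;> simp }
  have k1 : e0.hom ≫ biprod.snd ≫ π' = biprod.fst ≫ π ≫ e.hom := by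
    simp [e0, ha, reassoc_of% hb]
  have k2 : e0.inv ≫ biprod.fst ≫ π = biprod.snd ≫ π' ≫ e.inv := by
    rw [Iso.inv_comp_eq, ← cancel_mono e.hom]
    have := k1.symm
    simp only [Category.assoc, Iso.inv_hom_id, Category.comp_id] at this ⊢
    exact this
  obtain ⟨y, hy⟩ := exists_lift_of_ses h' (biprod.map f (𝟙 Q') ≫ e0.hom ≫ biprod.snd) (by
    simp only [Category.assoc, k1]; simp [reassoc_of% w])
  obtain ⟨z, hz⟩ := exists_lift_of_ses h (biprod.map (𝟙 Q) f' ≫ e0.inv ≫ biprod.fst) (by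
    simp only [Category.assoc, k2]; simp [reassoc_of% w'])
  refine iso_of_mono (M := dsum R (Cf R f) (KP R Q')) (N := dsum R (KP R Q) (Cf R f')) ?_ ?_ ?_ ?_ e0
    (biprod.lift (biprod.map f (𝟙 Q') ≫ e0.hom ≫ biprod.fst) y) ?_
    (biprod.lift z (biprod.map (𝟙 Q) f' ≫ e0.inv ≫ biprod.snd)) ?_
  · change biprod.map (0 : Q ⟶ P) (0 : Q' ⟶ Q') = 0
    ext <;> simp
  · change biprod.map (0 : Q ⟶ Q) (0 : Q' ⟶ P') = 0
    ext <;> simp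
  · change Mono (biprod.map f (𝟙 Q')); infer_instance
  · change Mono (biprod.map (𝟙 Q) f'); infer_instance
  · change biprod.lift (biprod.map f (𝟙 Q') ≫ e0.hom ≫ biprod.fst) y ≫ biprod.map (𝟙 Q) f' =
      biprod.map f (𝟙 Q') ≫ e0.hom
    apply biprod.hom_ext
    · simp
    · simp [hy]
  · change biprod.lift z (biprod.map (𝟙 Q) f' ≫ e0.inv ≫ biprod.snd) ≫ biprod.map f (𝟙 Q') =
      biprod.map (𝟙 Q) f' ≫ e0.inv
    apply biprod.hom_ext
    · simp [hz]
    · simp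

lemma schanuel_ic {P Q A P' Q' A' : R} {f : P ⟶ Q} {π : Q ⟶ A} {w : f ≫ π = 0}
    {f' : P' ⟶ Q'} {π' : Q' ⟶ A'} {w' : f' ≫ π' = 0}
    (h : (ShortComplex.mk f π w).ShortExact) (h' : (ShortComplex.mk f' π' w').ShortExact)
    (e : A ≅ A') (hQ : Projective Q) (hQ' : Projective Q') :
    ic (Cf R f) + ic (KP R Q') = ic (Cf R f') + ic (KP R Q) := by
  rw [add_comm (ic (Cf R f'))]
  exact ic_eq.2 (schanuel h h' e hQ hQ')

lemma schanuel_dic {P Q A P' Q' A' : R} {f : P ⟶ Q} {π : Q ⟶ A} {w : f ≫ π = 0}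
    {f' : P' ⟶ Q'} {π' : Q' ⟶ A'} {w' : f' ≫ π' = 0}
    (h : (ShortComplex.mk f π w).ShortExact) (h' : (ShortComplex.mk f' π' w').ShortExact)
    (e : A ≅ A') (hQ : Projective Q) (hQ' : Projective Q') :
    ic (dagger R (Cf R f)) + ic (dagger R (KP R Q')) =
      ic (dagger R (Cf R f')) + ic (dagger R (KP R Q)) := by
  rw [add_comm (ic (dagger R (Cf R f')))]
  obtain ⟨x⟩ := schanuel h h' e hQ hQ'
  obtain ⟨y⟩ := dagger_dsum (Cf R f) (KP R Q')
  obtain ⟨z⟩ := dagger_dsum (KP R Q) (Cf R f')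
  exact ic_eq.2 ⟨y.symm ≪≫ daggerIso x ≪≫ z⟩

end Z2Cx

namespace Z2Cx

open ZeroObject

lemma spec' (dd : DecData R) {M : Z2Cx R} (hM0 : Projective M.X0) (hM1 : Projective M.X1) :
    ∃ (P Q P' Q' : R) (f : P ⟶ Q) (g : P' ⟶ Q'),
      Projective P ∧ Projective Q ∧ Projective P' ∧ Projective Q' ∧ Mono f ∧ Mono g ∧
      Nonempty (M ≅ dsum R (Cf R f) (dagger R (Cf R g))) ∧
      Nonempty (cokernel f ≅ H0 R M) ∧ Nonempty (cokernel g ≅ H1 R M) := by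
  obtain ⟨P, Q, P', Q', f, g, h1, h2, h3, h4, h5, h6, ⟨e⟩, -, -⟩ := dd.spec M hM0 hM1
  refine ⟨P, Q, P', Q', f, g, h1, h2, h3, h4, h5, h6, ⟨e⟩, ?_, ?_⟩
  · obtain ⟨x⟩ := H0_Cf (ses_coker f)
    have y := H0_dCf (ses_coker g)
    exact ⟨x.symm ≪≫ isoBiprodZero y ≪≫ (H0iso _ _).symm ≪≫ (H0map e).symm⟩
  · obtain ⟨x⟩ := H1_dCf (ses_coker g)
    have y := H1_Cf (ses_coker f)
    exact ⟨x.symm ≪≫ isoZeroBiprod y ≪≫ (H1iso _ _).symm ≪≫ (H1map e).symm⟩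

lemma finite_Ho (dd : DecData R) (M : Z2Cx R) {N : Z2Cx R} (hN : FinCx R N) : Finite (Ho M N) := by
  obtain ⟨h0, h1, h2, h3⟩ := hN
  obtain ⟨P, Q, P', Q', f, g, -, -, -, -, h5, h6, ⟨e⟩, ⟨x⟩, ⟨y⟩⟩ := spec' dd h0 h1
  have := finite_Ho_Cf (ses_coker f) (h2.of_iso x.symm) M
  have := finite_Ho_dCf (ses_coker g) (h3.of_iso y.symm) M
  obtain ⟨e'⟩ := postIso M e
  have := Finite.of_injective _ (bijective_post M (Cf R f) (dagger R (Cf R g))).1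
  exact Finite.of_equiv _ e'.symm

lemma contr_of_acyclic (dd : DecData R) {K : Z2Cx R} (hK : FinCx R K) (ha : Acyclic R K) : Contr K := by
  obtain ⟨h0, h1, h2, h3⟩ := hK
  obtain ⟨P, Q, P', Q', f, g, -, -, -, -, h5, h6, ⟨e⟩, ⟨x⟩, ⟨y⟩⟩ := spec' dd h0 h1
  exact ((contr_Cf (ses_coker f) (ha.1.of_iso x)).dsum
    (contr_dCf (ses_coker g) (ha.2.of_iso y))).of_iso e.symm

/-! ### Invariants in the Grothendieck group -/

def C1F : Z2Cx R ⥤ R where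
  obj M := cokernel M.d1
  map {M N} f := cokernel.map M.d1 N.d1 (Hom.f1 f) (Hom.f0 f) (Hom.comm1 f)

def C0F : Z2Cx R ⥤ R where
  obj M := cokernel M.d0
  map {M N} f := cokernel.map M.d0 N.d0 (Hom.f0 f) (Hom.f1 f) (Hom.comm0 f)

lemma coker_map_add {X Y X' Y' : R} (d : X ⟶ Y) (d' : X' ⟶ Y') (a b : X ⟶ X') (a' b' : Y ⟶ Y')
    (h : d ≫ a' = a ≫ d') (h' : d ≫ b' = b ≫ d') (h'' : d ≫ (a' + b') = (a + b) ≫ d') :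
    cokernel.map d d' (a + b) (a' + b') h'' = cokernel.map d d' a a' h + cokernel.map d d' b b' h' := by
  apply coequalizer.hom_ext
  rw [Preadditive.comp_add]
  simp

instance : (C1F (R := R)).Additive where
  map_add {_ _ f g} := coker_map_add _ _ (Hom.f1 f) (Hom.f1 g) (Hom.f0 f) (Hom.f0 g)
    (Hom.comm1 f) (Hom.comm1 g) (Hom.comm1 (f + g))
instance : (C0F (R := R)).Additive where
  map_add {_ _ f g} := coker_map_add _ _ (Hom.f0 f) (Hom.f0 g) (Hom.f1 f) (Hom.f1 g)
    (Hom.comm0 f) (Hom.comm0 g) (Hom.comm0 (f + g))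

def isoX0 {M N : Z2Cx R} (e : M ≅ N) : M.X0 ≅ N.X0 := 
  ⟨Hom.f0 e.hom, Hom.f0 e.inv, congrArg Hom.f0 e.hom_inv_id, congrArg Hom.f0 e.inv_hom_id⟩
def isoX1 {M N : Z2Cx R} (e : M ≅ N) : M.X1 ≅ N.X1 := 
  ⟨Hom.f1 e.hom, Hom.f1 e.inv, congrArg Hom.f1 e.hom_inv_id, congrArg Hom.f1 e.inv_hom_id⟩

/-- The invariant: classes of boundaries. -/
def kap (M : Z2Cx R) : K0 R × K0 R :=
  (K0.cls R M.X0 - K0.cls R (cokernel M.d1), K0.cls R M.X1 - K0.cls R (cokernel M.d0))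

lemma kap_iso {M N : Z2Cx R} (e : M ≅ N) : kap M = kap N := by
  unfold kap
  rw [cls_iso (isoX0 e), cls_iso (isoX1 e)]
  have h1 : K0.cls R (cokernel M.d1) = K0.cls R (cokernel N.d1) := cls_iso (C1F.mapIso e)
  have h0 : K0.cls R (cokernel M.d0) = K0.cls R (cokernel N.d0) := cls_iso (C0F.mapIso e)
  rw [h0, h1]

lemma kap_dsum (M N : Z2Cx R) : kap (dsum R M N) = kap M + kap N := by
  have h0 : K0.cls R (dsum R M N).X0 = _ := cls_biprod M.X0 N.X0
  have h1 : K0.cls R (dsum R M N).X1 = _ := cls_biprod M.X1 N.X1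
  have c0 : K0.cls R (cokernel (dsum R M N).d0) = K0.cls R (cokernel M.d0) + K0.cls R (cokernel N.d0) :=
    (cls_iso (addIso C0F M N)).trans (cls_biprod _ _)
  have c1 : K0.cls R (cokernel (dsum R M N).d1) = K0.cls R (cokernel M.d1) + K0.cls R (cokernel N.d1) :=
    (cls_iso (addIso C1F M N)).trans (cls_biprod _ _)
  unfold kap
  rw [h0, h1, c0, c1]
  ext <;> simp <;> abel

def cokerZeroIso {X Y : R} (f : X ⟶ Y) (hf : f = 0) : cokernel f ≅ Y :=
  cokernelIsoOfEq hf ≪≫ cokernelZeroIsoTarget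

lemma cls_coker_mono {X Y : R} (f : X ⟶ Y) [Mono f] : 
    K0.cls R Y = K0.cls R X + K0.cls R (cokernel f) := cls_ses (ses_coker f)

lemma kap_KP (P : R) : kap (KP R P) = (K0.cls R P, 0) := by
  have h1 : K0.cls R P = K0.cls R P + K0.cls R (cokernel (𝟙 P)) := cls_coker_mono (𝟙 P)
  have h0 := cls_iso (cokerZeroIso (0 : P ⟶ P) rfl)
  change (K0.cls R P - K0.cls R (cokernel (𝟙 P)), K0.cls R P - K0.cls R (cokernel (0 : P ⟶ P))) = _
  rw [h0, sub_self, show K0.cls R (cokernel (𝟙 P)) = 0 by simpa using h1, sub_zero]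

lemma kap_dKP (P : R) : kap (dagger R (KP R P)) = (0, K0.cls R P) := by
  have h1 : K0.cls R P = K0.cls R P + K0.cls R (cokernel (-𝟙 P)) := by
    have : Mono (-𝟙 P) := (ses_neg (ses_id P)).mono_f
    exact cls_coker_mono (-𝟙 P)
  have h0 := cls_iso (cokerZeroIso (-0 : P ⟶ P) neg_zero)
  change (K0.cls R P - K0.cls R (cokernel (-0 : P ⟶ P)), K0.cls R P - K0.cls R (cokernel (-𝟙 P))) = _
  rw [h0, sub_self, show K0.cls R (cokernel (-𝟙 P)) = 0 by simpa using h1, sub_zero]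

/-- Every element of the Grothendieck group is a difference of projectives. -/
lemma cls_proj (dd : DecData R) (X : R) : ∃ P Q : R, Projective P ∧ Projective Q ∧
    K0.cls R X + K0.cls R P = K0.cls R Q := by
  let p := Projective.π X
  let d : Projective.over (kernel p) ⟶ Projective.over X := Projective.π (kernel p) ≫ kernel.ι p
  have hd : d ≫ p = 0 := by simp [d]
  have hM0 : Projective (Cf R d).X0 := by change Projective (Projective.over X); infer_instance
  have hM1 : Projective (Cf R d).X1 := by
    change Projective (Projective.over (kernel p)); infer_instance
  obtain ⟨P, Q, P', Q', f, g, h1, h2, h3, h4, h5, h6, ⟨e⟩, -, -⟩ := spec' dd hM0 hM1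
  have hX : cokernel d ≅ X := by
    have e1 : cokernel d ≅ cokernel (kernel.ι p) := cokernelEpiComp _ _
    exact e1 ≪≫ (CokernelCofork.mapIsoOfIsColimit (colimit.isColimit _)
        (Abelian.epiIsCokernelOfKernel _ (kernelIsKernel p)) (Iso.refl _) : _)
  have k1 : K0.cls R (cokernel d) =
      K0.cls R (cokernel f) + K0.cls R (cokernel (-0 : Q' ⟶ P')) :=
    (cls_iso (C1F.mapIso e ≪≫ addIso C1F _ _)).trans (cls_biprod _ _)
  rw [cls_iso hX, cls_iso (cokerZeroIso (-0 : Q' ⟶ P') neg_zero)] at k1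
  have k2 := cls_coker_mono f
  refine ⟨P, Q ⊞ P', h1, inferInstance, ?_⟩
  rw [k1, cls_biprod, k2]
  abel

lemma K0_proj (dd : DecData R) (a : K0 R) : ∃ P Q : R, Projective P ∧ Projective Q ∧
    a + K0.cls R P = K0.cls R Q := by
  obtain ⟨x, rfl⟩ := QuotientAddGroup.mk_surjective a
  induction x using FreeAbelianGroup.induction_on with
  | zero =>
    exact ⟨0, 0, inferInstance, inferInstance, zero_add _⟩
  | of X => exact cls_proj dd X
  | neg X =>
    obtain ⟨P, Q, hP, hQ, h⟩ := cls_proj dd X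
    refine ⟨Q, P, hQ, hP, ?_⟩
    change -K0.cls R X + _ = _
    rw [← h]; abel
  | add x y hx hy =>
    obtain ⟨P, Q, hP, hQ, h⟩ := hx
    obtain ⟨P', Q', hP', hQ', h'⟩ := hy
    refine ⟨P ⊞ P', Q ⊞ Q', inferInstance, inferInstance, ?_⟩
    rw [cls_biprod, cls_biprod, ← h, ← h', QuotientAddGroup.mk_add]
    abel

lemma K0_proj_finset (dd : DecData R) (s : Finset (K0 R)) : ∃ P : R, Projective P ∧
    ∀ a ∈ s, ∃ Q : R, Projective Q ∧ a + K0.cls R P = K0.cls R Q := by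
  induction s using Finset.induction_on with
  | empty => exact ⟨0, inferInstance, by simp⟩
  | insert a s _ ih =>
    obtain ⟨P, hP, h⟩ := ih
    obtain ⟨P', Q', hP', hQ', h'⟩ := K0_proj dd a
    refine ⟨P ⊞ P', inferInstance, fun b hb => ?_⟩
    rcases Finset.mem_insert.1 hb with rfl | hb
    · refine ⟨Q' ⊞ P, inferInstance, ?_⟩
      rw [cls_biprod, cls_biprod, ← h']; abel
    · obtain ⟨Q, hQ, e⟩ := h b hb
      refine ⟨Q ⊞ P', inferInstance, ?_⟩
      rw [cls_biprod, cls_biprod, ← e]; abel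

end Z2Cx

/-- A choice of projective resolutions for objects of `A`. -/
structure ResData (R : Type u) [SmallCategory R] [Abelian R] where
  rP : R → R
  rQ : R → R
  rf : ∀ C : R, rP C ⟶ rQ C
  rπ : ∀ C : R, rQ C ⟶ C
  hres : ∀ C : R, IsFinHom R C → Projective (rP C) ∧ Projective (rQ C) ∧
      ∃ w : rf C ≫ rπ C = 0, (ShortComplex.mk (rf C) (rπ C) w).ShortExact
  hfc : ∀ C : R, IsFinHom R C → FinCx R (Z2Cx.Cf R (rf C))
  hfcd : ∀ C : R, IsFinHom R C → FinCx R (Z2Cx.dagger R (Z2Cx.Cf R (rf C)))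

namespace Z2Cx

/-- The acyclic complexes `K_P ⊕ K_{P'}^†`. -/
def KK2 (P P' : R) : Z2Cx R := dsum R (KP R P) (dagger R (KP R P'))

lemma finCx_KK2 {P P' : R} (hP : Projective P) (hP' : Projective P') : FinCx R (KK2 P P') :=
  (finCx_KP P hP).dsum (finCx_dKP P' hP')

lemma contr_KK2 (P P' : R) : Contr (KK2 P P') := (contr_KP P).dsum (contr_KP P').dagger

lemma kap_KK2 (P P' : R) : kap (KK2 P P') = (K0.cls R P, K0.cls R P') := by
  rw [KK2, kap_dsum, kap_KP, kap_dKP]; simp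

lemma isZero_biprod {X Y : R} (hX : IsZero X) (hY : IsZero Y) : IsZero (X ⊞ Y) :=
  hY.of_iso (isoZeroBiprod hX).symm

lemma H0_KK2 (P P' : R) : IsZero (H0 R (KK2 P P')) :=
  (isZero_biprod (H0_KP P) (H0_dKP P')).of_iso (H0iso _ _)
lemma H1_KK2 (P P' : R) : IsZero (H1 R (KK2 P P')) :=
  (isZero_biprod (H1_KP P) (H1_dKP P')).of_iso (H1iso _ _)

lemma H0_add (M : Z2Cx R) {K : Z2Cx R} (h : IsZero (H0 R K)) : Nonempty (H0 R (dsum R M K) ≅ H0 R M) :=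
  ⟨H0iso M K ≪≫ (isoBiprodZero h).symm⟩
lemma H1_add (M : Z2Cx R) {K : Z2Cx R} (h : IsZero (H1 R K)) : Nonempty (H1 R (dsum R M K) ≅ H1 R M) :=
  ⟨H1iso M K ≪≫ (isoBiprodZero h).symm⟩

end Z2Cx

namespace ResData

open Z2Cx

variable (ρ : ResData R)

/-- The complex `C_A ⊕ C_B^†`. -/
def C (a b : IsoA R) : Z2Cx R :=
  dsum R (Cf R (ρ.rf (Quot.out a).1)) (dagger R (Cf R (ρ.rf (Quot.out b).1)))

lemma finC (a b : IsoA R) : FinCx R (ρ.C a b) :=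
  (ρ.hfc _ (Quot.out a).2).dsum (ρ.hfcd _ (Quot.out b).2)

lemma H0C (a b : IsoA R) : Nonempty (H0 R (ρ.C a b) ≅ (Quot.out a).1) := by
  obtain ⟨-, -, w, h⟩ := ρ.hres _ (Quot.out a).2
  obtain ⟨-, -, w', h'⟩ := ρ.hres _ (Quot.out b).2
  obtain ⟨e⟩ := H0_add (Cf R (ρ.rf (Quot.out a).1)) (H0_dCf h')
  obtain ⟨e'⟩ := H0_Cf h
  exact ⟨e ≪≫ e'⟩

lemma H1C (a b : IsoA R) : Nonempty (H1 R (ρ.C a b) ≅ (Quot.out b).1) := by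
  obtain ⟨-, -, w, h⟩ := ρ.hres _ (Quot.out a).2
  obtain ⟨-, -, w', h'⟩ := ρ.hres _ (Quot.out b).2
  obtain ⟨e'⟩ := H1_dCf h'
  exact ⟨H1iso _ _ ≪≫ (isoZeroBiprod (H1_Cf h)).symm ≪≫ e'⟩

lemma isoA_eq {a b : IsoA R} (e : (Quot.out a).1 ≅ (Quot.out b).1) : a = b := by
  rw [← Quot.out_eq a, ← Quot.out_eq b]
  exact Quot.sound ⟨e⟩

lemma exists_isoA {A : R} (hA : IsFinHom R A) : ∃ a : IsoA R, Nonempty ((Quot.out a).1 ≅ A) := by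
  refine ⟨Quot.mk _ ⟨A, hA⟩, ?_⟩
  have he : Equivalence (fun A B : {A : R // IsFinHom R A} => Nonempty (A.1 ≅ B.1)) :=
    ⟨fun _ => ⟨Iso.refl _⟩, fun ⟨e⟩ => ⟨e.symm⟩, fun ⟨e⟩ ⟨e'⟩ => ⟨e ≪≫ e'⟩⟩
  have := he.eqvGen_iff.1 (Quot.eqvGen_exact (Quot.out_eq (Quot.mk _ ⟨A, hA⟩ : IsoA R)))
  exact this

/-- Structure of complexes up to acyclic summands. -/
lemma structure_ic (dd : DecData R) {M : Z2Cx R} (hM : FinCx R M) :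
    ∃ (a b : IsoA R) (P P' Q Q' : R), Projective P ∧ Projective P' ∧ Projective Q ∧ Projective Q' ∧
      ic M + ic (KK2 P P') = ic (ρ.C a b) + ic (KK2 Q Q') := by
  obtain ⟨h0, h1, h2, h3⟩ := hM
  obtain ⟨P, Q, P', Q', f, g, hP, hQ, hP', hQ', h5, h6, he, ⟨x⟩, ⟨y⟩⟩ := spec' dd h0 h1
  obtain ⟨a, ⟨ea⟩⟩ := exists_isoA h2
  obtain ⟨b, ⟨eb⟩⟩ := exists_isoA h3
  obtain ⟨-, ha, w, h⟩ := ρ.hres _ (Quot.out a).2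
  obtain ⟨-, hb, w', h'⟩ := ρ.hres _ (Quot.out b).2
  refine ⟨a, b, ρ.rQ (Quot.out a).1, ρ.rQ (Quot.out b).1, Q, Q', ha, hb, hQ, hQ', ?_⟩
  have s1 := schanuel_ic (ses_coker f) h (x ≪≫ ea.symm) hQ ha
  have s2 := schanuel_dic (ses_coker g) h' (y ≪≫ eb.symm) hQ' hb
  rw [ic_eq.2 he, KK2, KK2, C, ic_dsum, ic_dsum, ic_dsum, ic_dsum, add_add_add_comm, s1, s2,
    add_add_add_comm]

lemma meas_structure {M N K L : Z2Cx R} (h : ic M + ic K = ic N + ic L) (hK : Contr K) (hL : Contr L) :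
    meas M = meas N := by
  obtain ⟨e⟩ := ic_eq.1 (show ic (dsum R M K) = ic (dsum R N L) from h)
  rw [← meas_dsum_contr M hK, ← meas_dsum_contr N hL, meas_iso e]

lemma distinguish {a b a' b' : IsoA R} {P P' Q Q' : R} {K : Z2Cx R} (hK : Acyclic R K)
    (e : dsum R (dsum R (ρ.C a b) (KK2 P P')) K ≅ dsum R (dsum R (ρ.C a' b') (KK2 Q Q')) K)
    : K0.cls R P = K0.cls R Q ∧ K0.cls R P' = K0.cls R Q' ∧ a = a' ∧ b = b' := by
  have ha : a = a' := by
    obtain ⟨e1⟩ := H0_add (dsum R (ρ.C a b) (KK2 P P')) hK.1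
    obtain ⟨e2⟩ := H0_add (ρ.C a b) (H0_KK2 P P')
    obtain ⟨e3⟩ := ρ.H0C a b
    obtain ⟨e1'⟩ := H0_add (dsum R (ρ.C a' b') (KK2 Q Q')) hK.1
    obtain ⟨e2'⟩ := H0_add (ρ.C a' b') (H0_KK2 Q Q')
    obtain ⟨e3'⟩ := ρ.H0C a' b'
    exact isoA_eq ((e1 ≪≫ e2 ≪≫ e3).symm ≪≫ H0map e ≪≫ e1' ≪≫ e2' ≪≫ e3')
  have hb : b = b' := by
    obtain ⟨e1⟩ := H1_add (dsum R (ρ.C a b) (KK2 P P')) hK.2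
    obtain ⟨e2⟩ := H1_add (ρ.C a b) (H1_KK2 P P')
    obtain ⟨e3⟩ := ρ.H1C a b
    obtain ⟨e1'⟩ := H1_add (dsum R (ρ.C a' b') (KK2 Q Q')) hK.2
    obtain ⟨e2'⟩ := H1_add (ρ.C a' b') (H1_KK2 Q Q')
    obtain ⟨e3'⟩ := ρ.H1C a' b'
    exact isoA_eq ((e1 ≪≫ e2 ≪≫ e3).symm ≪≫ H1map e ≪≫ e1' ≪≫ e2' ≪≫ e3')
  subst ha hb
  have := kap_iso e
  simp only [kap_dsum, kap_KK2] at this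
  have := add_left_cancel (add_right_cancel this)
  exact ⟨(Prod.mk.inj this).1, (Prod.mk.inj this).2, rfl, rfl⟩

end ResData

/-! ### Hall algebra -/

open Z2Cx

lemma fcls_eq {M N : FCx R} : fcls R M = fcls R N ↔ Nonempty (M.1 ≅ N.1) := by
  have he : Equivalence (fun M N : FCx R => Nonempty (M.1 ≅ N.1)) :=
    ⟨fun _ => ⟨Iso.refl _⟩, fun ⟨e⟩ => ⟨e.symm⟩, fun ⟨e⟩ ⟨e'⟩ => ⟨e ≪≫ e'⟩⟩
  exact ⟨fun h => he.eqvGen_iff.1 (Quot.eqvGen_exact h), fun h => Quot.sound h⟩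

lemma ccls_eq {M N : Z2Cx R} : ccls R M = ccls R N ↔ Nonempty (M ≅ N) := by
  have he : Equivalence (cxRel R) :=
    ⟨fun _ => ⟨Iso.refl _⟩, fun ⟨e⟩ => ⟨e.symm⟩, fun ⟨e⟩ ⟨e'⟩ => ⟨e ≪≫ e'⟩⟩
  exact ⟨fun h => he.eqvGen_iff.1 (Quot.eqvGen_exact h), fun h => Quot.sound h⟩

lemma extCount_pos {M N : Z2Cx R} {c : CxCls R} (h : extCount R M N c ≠ 0) :
    ∃ s : ExtSES M N, ccls R s.E = c := by
  by_contra hc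
  push Not at hc
  apply h
  have : IsEmpty {x : ExtCl M N // extMid R x = c} := by
    refine ⟨fun x => ?_⟩
    obtain ⟨⟨s⟩, hs⟩ := x
    exact hc s hs
  exact Nat.card_of_isEmpty

lemma extCount_one {M N : Z2Cx R} {E : Z2Cx R} (e : E ≅ dsum R M N)
    (h : ∀ s : ExtSES M N, Nonempty (s.E ≅ dsum R M N) → ExtEquiv M N s (ExtSES.split M N)) :
    extCount R M N (ccls R E) = 1 := by
  unfold extCount
  rw [Nat.card_eq_one_iff_unique]
  refine ⟨⟨?_⟩, ⟨⟨Quot.mk _ (ExtSES.split M N), ?_⟩⟩⟩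
  · rintro ⟨⟨s⟩, hs⟩ ⟨⟨t⟩, ht⟩
    apply Subtype.ext
    have h1 : ∀ s : ExtSES M N, ccls R s.E = ccls R E →
        (Quot.mk _ s : ExtCl M N) = Quot.mk _ (ExtSES.split M N) := fun s hs => by
      obtain ⟨x⟩ := ccls_eq.1 hs
      exact Quot.sound (h s ⟨x ≪≫ e⟩)
    exact (h1 s hs).trans (h1 t ht).symm
  · exact ccls_eq.2 ⟨e.symm⟩

/-- The measure on isomorphism classes. -/
def measF : FCls R → ℕ := Quot.lift (fun M => meas M.1) (fun _ _ ⟨e⟩ => meas_iso e)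

def FCx.add (M N : FCx R) : FCx R := ⟨dsum R M.1 N.1, M.2.dsum N.2⟩

/-- Basis elements of the Hall algebra. -/
def hs (M : FCx R) : FCls R →₀ ℂ := Finsupp.single (fcls R M) 1

lemma hs_iso {M N : FCx R} (e : Nonempty (M.1 ≅ N.1)) : hs M = hs N := by
  rw [hs, hs, fcls_eq.2 e]

lemma finite_Hcx {M N : Z2Cx R} (hN : FinCx R N) : Finite (Hcx R M ⟶ Hcx R N) := by
  have h0 : Finite ((Hcx R M).X0 ⟶ (Hcx R N).X0) := hN.2.2.1 _
  have h1 : Finite ((Hcx R M).X1 ⟶ (Hcx R N).X1) := hN.2.2.2 _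
  exact Finite.of_injective _ (toProd_injective (M := Hcx R M) (N := Hcx R N))

lemma hallCoeff_eq (S : DHSetting k R) (M N : FCx R) : ∃ α : ℂ, α ≠ 0 ∧ ∀ c,
    hallCoeff S.v S.ed S.dd M.1 N.1 c = α * (extCount R M.1 N.1 c : ℂ) := by
  have hq : (0 : ℝ) < Fintype.card k := by exact_mod_cast Fintype.card_pos
  have hh : hVal S.ed S.dd M.1 N.1 ≠ 0 := by
    unfold hVal
    have := finite_Hcx (M := M.1) N.2
    have : Nonempty (Hcx R M.1 ⟶ Hcx R N.1) := ⟨0⟩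
    refine mul_ne_zero (Real.rpow_pos_of_pos hq _).ne' ?_
    exact_mod_cast Nat.card_pos.ne'
  refine ⟨((S.v ^ (((S.ed.eQ (K0.cls R M.1.X0) (K0.cls R N.1.X0) +
      S.ed.eQ (K0.cls R M.1.X1) (K0.cls R N.1.X1) : ℚ)) : ℝ) / hVal S.ed S.dd M.1 N.1 : ℝ) : ℂ), ?_, ?_⟩
  · exact_mod_cast div_ne_zero (Real.rpow_pos_of_pos S.v_pos _).ne' hh
  · intro c
    unfold hallCoeff
    push_cast
    ring

lemma mulH_lead (S : DHSetting k R) (M N : FCx R) : ∃ (α : ℂ) (r : FCls R →₀ ℂ), α ≠ 0 ∧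
    S.mulH (hs M) (hs N) = α • hs (M.add N) + r ∧
    (∀ c ∈ r.support, measF c < meas (dsum R M.1 N.1)) ∧ (Contr N.1 → r = 0) := by
  obtain ⟨α, hα, h⟩ := hallCoeff_eq S M N
  have key : ∀ s : ExtSES M.1 N.1, Nonempty (s.E ≅ dsum R M.1 N.1) → 
      ExtEquiv M.1 N.1 s (ExtSES.split M.1 N.1) := by
    rintro s ⟨e⟩
    by_contra hs
    have := finite_Ho S.dd M.1 M.2
    have := finite_Ho S.dd M.1 N.2
    have := finite_Ho S.dd N.1 M.2
    have := finite_Ho S.dd N.1 N.2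
    have := s.meas_lt M.2.1 M.2.2.1 N.2.1 N.2.2.1 hs
    rw [meas_iso e] at this
    exact lt_irrefl _ this
  have ns : ∀ c : FCls R, S.mulH (hs M) (hs N) c ≠ 0 → c ≠ fcls R (M.add N) →
      ∃ s : ExtSES M.1 N.1, ccls R s.E = fc2c R c ∧ ¬ ExtEquiv M.1 N.1 s (ExtSES.split M.1 N.1) := by
    intro c hc hne
    have hc' := S.mulH_single M N c
    unfold hs at hc
    rw [hc', h] at hc
    obtain ⟨s, hs⟩ := extCount_pos (fun h0 => hc (by rw [h0]; simp))
    refine ⟨s, hs, fun hsp => hne ?_⟩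
    obtain ⟨φ, -, -⟩ := hsp
    induction c using Quot.ind with | _ E =>
    obtain ⟨ψ⟩ := ccls_eq.1 hs
    exact fcls_eq.2 ⟨ψ.symm ≪≫ φ⟩
  have lead : S.mulH (hs M) (hs N) (fcls R (M.add N)) = α := by
    have := S.mulH_single M N (fcls R (M.add N))
    rw [h] at this
    refine this.trans ?_
    rw [show fc2c R (fcls R (M.add N)) = ccls R (dsum R M.1 N.1) from rfl,
      extCount_one (Iso.refl _) key]
    simp
  refine ⟨α, S.mulH (hs M) (hs N) - α • hs (M.add N), hα, by abel, ?_, ?_⟩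
  · intro c hc
    rw [Finsupp.mem_support_iff] at hc
    have hne : c ≠ fcls R (M.add N) := by
      rintro rfl
      apply hc
      rw [Finsupp.sub_apply, lead]
      simp [hs]
    have hc2 : S.mulH (hs M) (hs N) c ≠ 0 := by
      intro h0
      apply hc
      rw [Finsupp.sub_apply, h0]
      simp [hs, hne.symm]
    obtain ⟨s, hs, hsp⟩ := ns c hc2 hne
    have := finite_Ho S.dd M.1 M.2
    have := finite_Ho S.dd M.1 N.2
    have := finite_Ho S.dd N.1 M.2
    have := finite_Ho S.dd N.1 N.2
    have := s.meas_lt M.2.1 M.2.2.1 N.2.1 N.2.2.1 hsp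
    induction c using Quot.ind with | _ E =>
    obtain ⟨ψ⟩ := ccls_eq.1 hs
    change meas E.1 < _
    rwa [← meas_iso ψ]
  · intro hN
    ext c
    by_cases hne : c = fcls R (M.add N)
    · subst hne
      rw [Finsupp.sub_apply, lead]
      simp [hs]
    · by_contra hc
      have hc2 : S.mulH (hs M) (hs N) c ≠ 0 := by
        intro h0
        apply hc
        rw [Finsupp.sub_apply, h0]
        simp [hs, Ne.symm hne]
      obtain ⟨s, hs, hsp⟩ := ns c hc2 hne
      exact hsp (s.equiv_split_of_contr M.2.1 M.2.2.1 hN)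

open Z2Cx

section DH

open ZeroObject

lemma fcls_surj (c : FCls R) : ∃ M, fcls R M = c := Quot.exists_rep c

variable (S : DHSetting k R)

/-- Elements in standard form. -/
def TT (p : K0 R × K0 R) : (FCls R →₀ ℂ) →ₗ[ℂ] S.D := (S.mulD.flip (S.KK p)).comp S.loc

lemma TT_apply (p : K0 R × K0 R) (x : FCls R →₀ ℂ) : TT S p x = S.mulD (S.loc x) (S.KK p) := rfl

lemma TT_zero (x : FCls R →₀ ℂ) : TT S 0 x = S.loc x := by
  rw [TT_apply, S.KK_zero, S.mul_one]

lemma finCx_zero : FinCx R (zeroCx R) :=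
  ⟨(inferInstance : Projective (0 : R)), (inferInstance : Projective (0 : R)),
    IsFinHom.of_isZero (H0_isZero (M := zeroCx R) rfl ⟨fun _ _ _ => (isZero_zero R).eq_of_tgt _ _⟩),
    IsFinHom.of_isZero (H1_isZero (M := zeroCx R) rfl ⟨fun _ _ _ => (isZero_zero R).eq_of_tgt _ _⟩)⟩

def FZ : FCx R := ⟨zeroCx R, finCx_zero⟩

lemma loc_FZ : S.loc (hs FZ) = S.one := S.loc_one finCx_zero

lemma TT_FZ (p : K0 R × K0 R) : TT S p (hs FZ) = S.KK p := by
  rw [TT_apply, loc_FZ, S.one_mul]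

/-- The scalar appearing in the commutation rule. -/
def scal (p : K0 R × K0 R) (M : FCx R) : ℂ :=
  (((S.v ^ ((sForm k R S.ed (p.1 - p.2) (clsOf R M.1) : ℚ) : ℝ) : ℝ) : ℂ))

lemma scal_ne (p : K0 R × K0 R) (M : FCx R) : scal S p M ≠ 0 := by
  unfold scal
  exact_mod_cast (Real.rpow_pos_of_pos S.v_pos _).ne'

lemma scal_FZ (p : K0 R × K0 R) : scal S p FZ = 1 := by
  have : clsOf R (FZ : FCx R).1 = 0 := sub_self _
  simp [scal, this, sForm]

lemma scal_diag (a : K0 R) (M : FCx R) : scal S (a, a) M = 1 := by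
  simp [scal, sForm]

lemma TT_mul_TT (x : FCls R →₀ ℂ) (M : FCx R) (p p' : K0 R × K0 R) :
    S.mulD (TT S p x) (TT S p' (hs M)) = scal S p M • TT S (p + p') (S.mulH x (hs M)) :=
  S.mul_general x M p.1 p.2 p'.1 p'.2

lemma TT_mul_KK (x : FCls R →₀ ℂ) (p p' : K0 R × K0 R) :
    S.mulD (TT S p x) (S.KK p') = TT S (p + p') x := by
  rw [← TT_FZ, TT_mul_TT, scal_FZ, one_smul, TT_apply, ← S.loc_mul, loc_FZ, S.mul_one, TT_apply]

lemma KK_mul_TT (M : FCx R) (p p' : K0 R × K0 R) :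
    S.mulD (S.KK p) (TT S p' (hs M)) = scal S p M • TT S (p + p') (hs M) := by
  rw [← TT_FZ, TT_mul_TT, TT_apply, ← S.loc_mul, loc_FZ, S.one_mul, ← TT_apply]

lemma loc_contr (M K : FCx R) (hK : Contr K.1) (q : K0 R × K0 R) (hq : S.loc (hs K) = S.KK q) :
    ∃ c : ℂ, c ≠ 0 ∧ ∀ p, TT S p (hs (M.add K)) = c • TT S (q + p) (hs M) := by
  obtain ⟨α, r, hα, h1, -, h3⟩ := mulH_lead S M K
  rw [h3 hK, add_zero] at h1
  refine ⟨α⁻¹, inv_ne_zero hα, fun p => ?_⟩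
  have : TT S q (hs M) = α • S.loc (hs (M.add K)) := by
    rw [TT_apply, ← hq, S.loc_mul, h1, map_smul]
  have h4 : S.loc (hs (M.add K)) = α⁻¹ • TT S q (hs M) := by
    rw [this, smul_smul, inv_mul_cancel₀ hα, one_smul]
  rw [TT_apply, h4, map_smul, LinearMap.smul_apply, TT_mul_KK]

def FK (P P' : R) (hP : Projective P) (hP' : Projective P') : FCx R := ⟨KK2 P P', finCx_KK2 hP hP'⟩

lemma TT_KK2 (M : FCx R) {P P' : R} (hP : Projective P) (hP' : Projective P') :
    ∃ c : ℂ, c ≠ 0 ∧ ∀ p, TT S p (hs (M.add (FK P P' hP hP'))) =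
      c • TT S (p + (K0.cls R P, K0.cls R P')) (hs M) := by
  let K1 : FCx R := ⟨KP R P, finCx_KP P hP⟩
  let K2 : FCx R := ⟨dagger R (KP R P'), finCx_dKP P' hP'⟩
  obtain ⟨c, hc, h⟩ := loc_contr S M K1 (contr_KP P) _ (S.KK_P P hP _)
  obtain ⟨c', hc', h'⟩ := loc_contr S (M.add K1) K2 (contr_KP P').dagger _ (S.KK_Pd P' hP' _)
  refine ⟨c' * c, mul_ne_zero hc' hc, fun p => ?_⟩
  have e : hs (M.add (FK P P' hP hP')) = hs ((M.add K1).add K2) := hs_iso (by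
    obtain ⟨e⟩ := iso_assoc M.1 K1.1 K2.1
    exact ⟨e.symm⟩)
  rw [e, h', h, smul_smul]
  rw [show (K0.cls R P, 0) + ((0, K0.cls R P') + p) = p + (K0.cls R P, K0.cls R P') by
    ext <;> simp [add_comm]]

variable (ρ : ResData R)

def FC (a b : IsoA R) : FCx R := ⟨ρ.C a b, ρ.finC a b⟩

/-- The basis of the localized Hall algebra. -/
def VV (i : (IsoA R × IsoA R) × (K0 R × K0 R)) : S.D := TT S i.2 (hs (FC ρ i.1.1 i.1.2))

lemma TT_VV (M : FCx R) : ∃ (c : ℂ) (a b : IsoA R) (s : K0 R × K0 R), c ≠ 0 ∧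
    meas M.1 = meas (ρ.C a b) ∧ ∀ p, TT S p (hs M) = c • VV S ρ ((a, b), p + s) := by
  obtain ⟨a, b, P, P', Q, Q', hP, hP', hQ, hQ', h⟩ := ρ.structure_ic S.dd M.2
  obtain ⟨c, hc, h1⟩ := TT_KK2 S M hP hP'
  obtain ⟨c', hc', h2⟩ := TT_KK2 S (FC ρ a b) hQ hQ'
  have e : hs (M.add (FK P P' hP hP')) = hs ((FC ρ a b).add (FK Q Q' hQ hQ')) :=
    hs_iso (ic_eq.1 h)
  refine ⟨c⁻¹ * c', a, b, (K0.cls R Q, K0.cls R Q') - (K0.cls R P, K0.cls R P'),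
    mul_ne_zero (inv_ne_zero hc) hc',
    ResData.meas_structure h (contr_KK2 _ _) (contr_KK2 _ _), fun p => ?_⟩
  have h3 := h1 (p - (K0.cls R P, K0.cls R P'))
  rw [e, h2, sub_add_cancel] at h3
  rw [mul_smul, VV]
  rw [eq_inv_smul_iff₀ hc, ← h3, sub_add_eq_add_sub, add_sub_assoc]

lemma TT_mem (x : FCls R →₀ ℂ) (p : K0 R × K0 R) :
    TT S p x ∈ Submodule.span ℂ (Set.range (VV S ρ)) := by
  induction x using Finsupp.induction_linear with
  | zero => simp
  | add f g hf hg => rw [map_add]; exact Submodule.add_mem _ hf hg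
  | single c z =>
    obtain ⟨M, rfl⟩ := fcls_surj c
    have : Finsupp.single (fcls R M) z = z • hs M := by
      simp [hs]
    rw [this, map_smul]
    obtain ⟨c, a, b, s, -, -, h⟩ := TT_VV S ρ M
    rw [h]
    exact Submodule.smul_mem _ _ (Submodule.smul_mem _ _ (Submodule.subset_span ⟨_, rfl⟩))

lemma VV_span : ⊤ ≤ Submodule.span ℂ (Set.range (VV S ρ)) := by
  intro d _
  obtain ⟨x, a, b, rfl⟩ := S.span d
  exact TT_mem S ρ x (a, b)

lemma VV_indep : LinearIndependent ℂ (VV S ρ) := by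
  rw [linearIndependent_iff]
  intro l hl
  obtain ⟨P, hP, h1⟩ := K0_proj_finset S.dd (l.support.image (fun i => i.2.1))
  obtain ⟨P', hP', h2⟩ := K0_proj_finset S.dd (l.support.image (fun i => i.2.2))
  have h1' : ∀ i : (IsoA R × IsoA R) × (K0 R × K0 R), ∃ Q : R, Projective Q ∧
      (i ∈ l.support → i.2.1 + K0.cls R P = K0.cls R Q) := fun i => by
    by_cases hi : i ∈ l.support
    · obtain ⟨Q, hQ, h⟩ := h1 _ (Finset.mem_image_of_mem _ hi)
      exact ⟨Q, hQ, fun _ => h⟩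
    · exact ⟨P, hP, fun h => absurd h hi⟩
  have h2' : ∀ i : (IsoA R × IsoA R) × (K0 R × K0 R), ∃ Q : R, Projective Q ∧
      (i ∈ l.support → i.2.2 + K0.cls R P' = K0.cls R Q) := fun i => by
    by_cases hi : i ∈ l.support
    · obtain ⟨Q, hQ, h⟩ := h2 _ (Finset.mem_image_of_mem _ hi)
      exact ⟨Q, hQ, fun _ => h⟩
    · exact ⟨P, hP, fun h => absurd h hi⟩
  choose Q hQ hQ1 using h1'
  choose Q' hQ' hQ1' using h2'
  let N : (IsoA R × IsoA R) × (K0 R × K0 R) → FCx R := fun i =>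
    (FC ρ i.1.1 i.1.2).add (FK (Q i) (Q' i) (hQ i) (hQ' i))
  have hN : ∀ i, ∃ c : ℂ, c ≠ 0 ∧ (i ∈ l.support →
      S.mulD (VV S ρ i) (S.KK (K0.cls R P, K0.cls R P')) = c • S.loc (hs (N i))) := fun i => by
    obtain ⟨c, hc, h⟩ := TT_KK2 S (FC ρ i.1.1 i.1.2) (hQ i) (hQ' i)
    refine ⟨c⁻¹, inv_ne_zero hc, fun hi => ?_⟩
    rw [eq_inv_smul_iff₀ hc, VV, TT_mul_KK, ← TT_zero, h, zero_add, ← hQ1 i hi, ← hQ1' i hi]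
    rfl
  choose c hc hcN using hN
  let x : FCls R →₀ ℂ := ∑ i ∈ l.support, (l i * c i) • hs (N i)
  have hx : S.loc x = 0 := by
    have := congrArg (fun d => S.mulD d (S.KK (K0.cls R P, K0.cls R P'))) hl
    simp only [Finsupp.linearCombination_apply, Finsupp.sum, map_sum, map_zero, LinearMap.zero_apply,
      LinearMap.sum_apply, map_smul, LinearMap.smul_apply] at this
    rw [← this, map_sum]
    refine Finset.sum_congr rfl fun i hi => ?_
    rw [hcN i hi, map_smul, smul_smul]
  obtain ⟨K, hK, hac, hx0⟩ := (S.loc_ker x).1 hx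
  have hKc := contr_of_acyclic S.dd hK hac
  let FKK : FCx R := ⟨K, hK⟩
  have hM : ∀ i, ∃ c' : ℂ, c' ≠ 0 ∧ S.mulH (hs (N i)) (hs FKK) = c' • hs ((N i).add FKK) := fun i => by
    obtain ⟨α, r, hα, h1, -, h3⟩ := mulH_lead S (N i) FKK
    rw [h3 hKc, add_zero] at h1
    exact ⟨α, hα, h1⟩
  choose c' hc' hcM using hM
  have hx1 : ∑ i ∈ l.support, (l i * c i * c' i) • hs ((N i).add FKK) = 0 := by
    have hx0' : S.mulH x (hs FKK) = 0 := hx0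
    rw [← hx0', map_sum, LinearMap.sum_apply]
    refine Finset.sum_congr rfl fun i _ => ?_
    rw [map_smul, LinearMap.smul_apply, hcM, smul_smul]
  by_contra hne
  obtain ⟨j, hj⟩ := Finsupp.support_nonempty_iff.2 hne
  have h4 := DFunLike.congr_fun hx1 (fcls R ((N j).add FKK))
  rw [Finsupp.finsetSum_apply, Finset.sum_eq_single j] at h4
  · rw [Finsupp.smul_apply, hs, Finsupp.single_eq_same] at h4
    simp only [smul_eq_mul, mul_one, Finsupp.coe_zero, Pi.zero_apply] at h4
    exact mul_ne_zero (mul_ne_zero (Finsupp.mem_support_iff.1 hj) (hc j)) (hc' j) h4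
  · intro i hi hij
    rw [Finsupp.smul_apply, hs, Finsupp.single_eq_of_ne, smul_zero]
    intro he
    obtain ⟨e⟩ := fcls_eq.1 he
    obtain ⟨q1, q2, q3, q4⟩ := ρ.distinguish hac e
    apply hij
    rw [← hQ1 j hj, ← hQ1 i hi] at q1
    rw [← hQ1' j hj, ← hQ1' i hi] at q2
    exact Prod.ext (Prod.ext q3.symm q4.symm)
      (Prod.ext (add_right_cancel q1).symm (add_right_cancel q2).symm)
  · exact fun h => absurd hj h

def VB : Module.Basis ((IsoA R × IsoA R) × (K0 R × K0 R)) ℂ S.D :=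
  Module.Basis.mk (VV_indep S ρ) (VV_span S ρ)

end DH

/-! ### A triangularity lemma -/

section tri

variable {ι κ V : Type*} [AddCommGroup V] [Module ℂ V]

lemma tri_span (W : κ → V) (m : κ → ℕ) (Y : ι → V) (e : ι ≃ κ) (c : ι → ℂ) (hc : ∀ i, c i ≠ 0)
    (h : ∀ i, Y i - c i • W (e i) ∈ Submodule.span ℂ (W '' {j | m j < m (e i)})) (n : ℕ) :
    ∀ j, m j < n → W j ∈ Submodule.span ℂ (Set.range Y) := by
  induction n with
  | zero => intro j hj; omega
  | succ n ih =>
    intro j hj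
    obtain ⟨i, rfl⟩ := e.surjective j
    have h1 : Submodule.span ℂ (W '' {j | m j < m (e i)}) ≤ Submodule.span ℂ (Set.range Y) := by
      rw [Submodule.span_le]
      rintro _ ⟨j, hj', rfl⟩
      have : m j < m (e i) := hj'
      exact ih j (by omega)
    have h2 := Submodule.sub_mem _ (Submodule.subset_span ⟨i, rfl⟩ : Y i ∈ Submodule.span ℂ (Set.range Y))
      (h1 (h i))
    rw [sub_sub_cancel] at h2
    exact (Submodule.smul_mem_iff _ (hc i)).1 h2

lemma tri_indep (W : κ → V) (hW : LinearIndependent ℂ W) (m : κ → ℕ) (Y : ι → V) (e : ι ≃ κ)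
    (c : ι → ℂ) (hc : ∀ i, c i ≠ 0)
    (h : ∀ i, Y i - c i • W (e i) ∈ Submodule.span ℂ (W '' {j | m j < m (e i)})) :
    LinearIndependent ℂ Y := by
  rw [linearIndependent_iff]
  intro l hl
  by_contra hne
  obtain ⟨i, hi, hmax⟩ := l.support.exists_max_image (fun i => m (e i))
    (Finsupp.support_nonempty_iff.2 hne)
  rw [Finsupp.linearCombination_apply, Finsupp.sum] at hl
  -- separate terms of top measure from those of lower measure
  let n := m (e i)
  let U := Submodule.span ℂ (W '' {j | j ≠ e i})
  have hU : W (e i) ∉ U := by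
    have := hW.notMem_span_image (s := {j | j ≠ e i}) (x := e i) (by simp)
    exact this
  have hr : ∀ i' ∈ l.support, Y i' - c i' • W (e i') ∈ U := fun i' hi' => by
    refine Submodule.span_mono ?_ (h i')
    apply Set.image_mono
    intro j hj
    have h1 : m j < m (e i') := hj
    have h2 : m (e i') ≤ m (e i) := hmax i' hi'
    rintro rfl
    omega
  have hs : ∀ i' ∈ l.support.erase i, l i' • Y i' ∈ U := fun i' hi' => by
    rw [Finset.mem_erase] at hi'
    have h1 : W (e i') ∈ U := Submodule.subset_span ⟨e i', by simpa using hi'.1, rfl⟩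
    have h2 := Submodule.add_mem _ (hr i' hi'.2) (Submodule.smul_mem _ (c i') h1)
    rw [sub_add_cancel] at h2
    exact Submodule.smul_mem _ _ h2
  rw [← Finset.add_sum_erase _ _ hi] at hl
  have h3 : l i • Y i ∈ U := by
    rw [eq_neg_of_add_eq_zero_left hl]
    exact Submodule.neg_mem _ (Submodule.sum_mem _ hs)
  rw [Submodule.smul_mem_iff _ (Finsupp.mem_support_iff.1 hi)] at h3
  have h4 := Submodule.sub_mem _ h3 (hr i hi)
  rw [sub_sub_cancel, Submodule.smul_mem_iff _ (hc i)] at h4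
  exact hU h4

lemma bijective_of_basis {X : Type*} [AddCommMonoid X] [Module ℂ X] (b : Module.Basis ι ℂ X)
    (f : X →ₗ[ℂ] V) (hi : LinearIndependent ℂ (fun i => f (b i)))
    (hs : ⊤ ≤ Submodule.span ℂ (Set.range (fun i => f (b i)))) : Function.Bijective f := by
  let b' := Module.Basis.mk hi hs
  have : f = (b.equiv b' (Equiv.refl ι)).toLinearMap := by
    apply b.ext
    intro i
    simp [b']
  rw [this]
  exact (b.equiv b' (Equiv.refl ι)).bijective

end tri

section DHr

open Z2Cx

variable (S : DHSetting k R) (ρ : ResData R)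

/-- The quotient map. -/
def qm : S.D →ₗ[ℂ] DHred S := (redIdeal S).mkQ

lemma qm_surj : Function.Surjective (qm S) := (redIdeal S).mkQ_surjective

lemma TT_diag (q : K0 R × K0 R) (M : FCx R) (a : K0 R) :
    S.mulD (S.KK (a, a) - S.one) (TT S q (hs M)) = TT S (q + (a, a)) (hs M) - TT S q (hs M) := by
  rw [map_sub, LinearMap.sub_apply, S.one_mul, KK_mul_TT, scal_diag, one_smul, add_comm]

lemma qm_diag (q : K0 R × K0 R) (M : FCx R) {P : R} (hP : Projective P) :
    qm S (TT S (q + (K0.cls R P, K0.cls R P)) (hs M)) = qm S (TT S q (hs M)) := by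
  rw [← sub_eq_zero, ← map_sub, ← TT_diag]
  refine (Submodule.Quotient.mk_eq_zero _).2 (Submodule.subset_span ⟨S.one, TT S q (hs M), P, hP, ?_⟩)
  rw [S.one_mul]

def collapse (i : (IsoA R × IsoA R) × (K0 R × K0 R)) : (IsoA R × IsoA R) × K0 R := (i.1, i.2.1 - i.2.2)

def redMap : S.D →ₗ[ℂ] ((IsoA R × IsoA R) × K0 R →₀ ℂ) :=
  (Finsupp.lmapDomain ℂ ℂ collapse).comp (VB S ρ).repr.toLinearMap

lemma redMap_VV (i : (IsoA R × IsoA R) × (K0 R × K0 R)) :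
    redMap S ρ (VV S ρ i) = Finsupp.single (collapse i) 1 := by
  have : VV S ρ i = VB S ρ i := by simp [VB]
  rw [this]
  simp [redMap]

lemma redMap_TT (z : FCls R →₀ ℂ) (q : K0 R × K0 R) (a : K0 R) :
    redMap S ρ (TT S (q + (a, a)) z) = redMap S ρ (TT S q z) := by
  induction z using Finsupp.induction_linear with
  | zero => simp
  | add f g hf hg => rw [map_add, map_add, hf, hg, map_add, map_add]
  | single c z =>
    obtain ⟨M, rfl⟩ := fcls_surj c
    have : Finsupp.single (fcls R M) z = z • hs M := by
      simp [hs]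
    rw [this, map_smul, map_smul, map_smul, map_smul]
    obtain ⟨c, a', b, s, -, -, h⟩ := TT_VV S ρ M
    rw [h, h, map_smul, map_smul, redMap_VV, redMap_VV]
    congr 3
    simp [collapse]
    try abel

lemma redMap_mul (x y : S.D) (a : K0 R) :
    redMap S ρ (S.mulD x (S.mulD (S.KK (a, a) - S.one) y)) = 0 := by
  obtain ⟨x, p1, p2, rfl⟩ := S.span x
  obtain ⟨y, q1, q2, rfl⟩ := S.span y
  rw [← TT_apply, ← TT_apply]
  induction y using Finsupp.induction_linear with
  | zero => simp
  | add f g hf hg => rw [map_add, map_add, map_add, map_add, hf, hg, add_zero]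
  | single c z =>
    obtain ⟨M, rfl⟩ := fcls_surj c
    have : Finsupp.single (fcls R M) z = z • hs M := by
      simp [hs]
    rw [this, map_smul, map_smul, map_smul, map_smul, TT_diag, map_sub, TT_mul_TT, TT_mul_TT,
      map_sub, map_smul, map_smul, ← add_assoc, redMap_TT, sub_self, smul_zero]

lemma redIdeal_le : redIdeal S ≤ LinearMap.ker (redMap S ρ) := by
  unfold redIdeal
  rw [Submodule.span_le]
  rintro _ ⟨x, y, P, -, rfl⟩
  exact redMap_mul S ρ x y _

def redMap' : DHred S →ₗ[ℂ] ((IsoA R × IsoA R) × K0 R →₀ ℂ) :=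
  (redIdeal S).liftQ (redMap S ρ) (redIdeal_le S ρ)

lemma redMap'_qm (d : S.D) : redMap' S ρ (qm S d) = redMap S ρ d :=
  (redIdeal S).liftQ_apply _ d

/-- The basis of the reduced algebra. -/
def WW (i : (IsoA R × IsoA R) × K0 R) : DHred S := qm S (VV S ρ (i.1, (i.2, 0)))

lemma qm_VV (i : (IsoA R × IsoA R) × (K0 R × K0 R)) : qm S (VV S ρ i) = WW S ρ (collapse i) := by
  obtain ⟨ab, α, β⟩ := i
  obtain ⟨P, Q, hP, hQ, h⟩ := K0_proj S.dd β
  unfold WW VV collapse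
  dsimp only
  rw [← qm_diag S (α, β) _ hP, ← qm_diag S (α - β, 0) _ hQ]
  rw [show (α, β) + (K0.cls R P, K0.cls R P) = (α - β, 0) + (K0.cls R Q, K0.cls R Q) by
    
    rw [← h]
    refine Prod.ext ?_ ?_
    · simp only [Prod.fst_add]; abel
    · simp only [Prod.snd_add]; abel]

lemma WW_span : ⊤ ≤ Submodule.span ℂ (Set.range (WW S ρ)) := by
  intro d _
  obtain ⟨d, rfl⟩ := qm_surj S d
  have := VV_span S ρ (Submodule.mem_top (x := d))
  induction this using Submodule.span_induction with
  | mem x hx =>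
    obtain ⟨i, rfl⟩ := hx
    rw [qm_VV]
    exact Submodule.subset_span ⟨_, rfl⟩
  | zero => simp
  | add x y _ _ hx hy => rw [map_add]; exact Submodule.add_mem _ (hx trivial) (hy trivial)
  | smul a x _ hx => rw [map_smul]; exact Submodule.smul_mem _ _ (hx trivial)

lemma WW_indep : LinearIndependent ℂ (WW S ρ) := by
  apply LinearIndependent.of_comp (redMap' S ρ)
  have : redMap' S ρ ∘ WW S ρ = fun i => Finsupp.single i (1 : ℂ) := by
    funext i
    simp [WW, redMap'_qm, redMap_VV, collapse]
  rw [this]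
  exact Finsupp.linearIndependent_single_one ℂ _

/-- Measure on the index set. -/
def mW (i : (IsoA R × IsoA R) × K0 R) : ℕ := meas (ρ.C i.1.1 i.1.2)

lemma qm_TT_mem (r : FCls R →₀ ℂ) (n : ℕ) (hr : ∀ c ∈ r.support, measF c < n) (p : K0 R × K0 R) :
    qm S (TT S p r) ∈ Submodule.span ℂ (WW S ρ '' {j | mW ρ j < n}) := by
  rw [← Finsupp.sum_single r, Finsupp.sum, map_sum, map_sum]
  refine Submodule.sum_mem _ fun c hc => ?_
  obtain ⟨M, rfl⟩ := fcls_surj c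
  have : ∀ z, Finsupp.single (fcls R M) z = z • hs M := by
    simp [hs]
  obtain ⟨c, a, b, s, -, hm, h⟩ := TT_VV S ρ M
  rw [this, map_smul, map_smul, h, map_smul, qm_VV]
  refine Submodule.smul_mem _ _ (Submodule.smul_mem _ _ (Submodule.subset_span ⟨_, ?_, rfl⟩))
  change meas (ρ.C a b) < n
  rw [← hm]
  exact hr _ hc

lemma Eelt_eq (M : FCx R) : ∃ (c : ℂ) (s : K0 R × K0 R), c ≠ 0 ∧ Eelt S M.1 M.2 = c • TT S s (hs M) := by
  have h := KK_mul_TT S M (-(S.dd.cplus M.1), -(S.dd.cminus M.1)) 0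
  rw [TT_zero] at h
  refine ⟨((S.v ^ ((S.ed.eQ (S.dd.cplus M.1 - S.dd.cminus M.1) (clsOf R M.1) : ℚ) : ℝ) : ℝ) : ℂ) *
    scal S (-(S.dd.cplus M.1), -(S.dd.cminus M.1)) M,
    (-(S.dd.cplus M.1), -(S.dd.cminus M.1)) + 0,
    mul_ne_zero (by exact_mod_cast (Real.rpow_pos_of_pos S.v_pos _).ne') (scal_ne S _ M), ?_⟩
  unfold Eelt
  rw [mul_smul]
  exact congrArg _ h

lemma triple_eq (a b : IsoA R) : ∃ s : K0 R, ∀ α : K0 R, ∃ c : ℂ, c ≠ 0 ∧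
    qm S (S.mulD (Eelt S _ (ρ.hfc (Quot.out a).1 (Quot.out a).2))
      (S.mulD (S.KK (α, 0)) (Eelt S _ (ρ.hfcd (Quot.out b).1 (Quot.out b).2)))) -
      c • WW S ρ ((a, b), α + s) ∈ 
      Submodule.span ℂ (WW S ρ '' {j | mW ρ j < mW ρ ((a, b), α + s)}) := by
  let M : FCx R := ⟨_, ρ.hfc (Quot.out a).1 (Quot.out a).2⟩
  let N : FCx R := ⟨_, ρ.hfcd (Quot.out b).1 (Quot.out b).2⟩
  obtain ⟨c, s, hc, h⟩ := Eelt_eq S M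
  obtain ⟨c', s', hc', h'⟩ := Eelt_eq S N
  obtain ⟨γ, r, hγ, h1, h2, -⟩ := mulH_lead S M N
  refine ⟨(s + s').1 - (s + s').2, fun α => ?_⟩
  have key : S.mulD (Eelt S M.1 M.2) (S.mulD (S.KK (α, 0)) (Eelt S N.1 N.2)) =
      (c * c' * scal S (α, 0) N * scal S s N) •
        TT S (s + ((α, 0) + s')) (S.mulH (hs M) (hs N)) := by
    rw [h, h', (S.mulD (S.KK (α, 0))).map_smul, KK_mul_TT]
    simp only [map_smul, LinearMap.smul_apply, TT_mul_TT, smul_smul]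
    congr 1
    ring
  have hM : hs (M.add N) = hs (FC ρ a b) := rfl
  have hcol : collapse (((a, b), s + ((α, 0) + s')) : (IsoA R × IsoA R) × (K0 R × K0 R)) =
      ((a, b), α + ((s + s').1 - (s + s').2)) := by
    simp only [collapse, Prod.fst_add, Prod.snd_add]
    congr 1
    abel
  refine ⟨c * c' * scal S (α, 0) N * scal S s N * γ,
    mul_ne_zero (mul_ne_zero (mul_ne_zero (mul_ne_zero hc hc') (scal_ne _ _ _)) (scal_ne _ _ _)) hγ, ?_⟩
  have e1 : qm S (S.mulD (Eelt S M.1 M.2) (S.mulD (S.KK (α, 0)) (Eelt S N.1 N.2))) -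
      (c * c' * scal S (α, 0) N * scal S s N * γ) • WW S ρ ((a, b), α + ((s + s').1 - (s + s').2)) =
      (c * c' * scal S (α, 0) N * scal S s N) • qm S (TT S (s + ((α, 0) + s')) r) := by
    rw [key, h1, map_smul, map_add, map_add, map_smul, map_smul, hM, ← hcol, ← qm_VV, smul_add,
      smul_smul]
    exact add_sub_cancel_left _ _
  rw [show (_ - _ : DHred S) = _ from e1]
  exact Submodule.smul_mem _ _ (qm_TT_mem S ρ r _ h2 _)

lemma triMap_bijective : Function.Bijective (triMap S ρ.rP ρ.rQ ρ.rf ρ.hfc ρ.hfcd) := by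
  choose s hs using triple_eq S ρ
  choose c hc h using hs
  let b : Module.Basis (IsoA R × (K0 R × IsoA R)) ℂ
      ((IsoA R →₀ ℂ) ⊗[ℂ] ((K0 R →₀ ℂ) ⊗[ℂ] (IsoA R →₀ ℂ))) :=
    Module.Basis.tensorProduct Finsupp.basisSingleOne
      (Module.Basis.tensorProduct Finsupp.basisSingleOne Finsupp.basisSingleOne)
  let e : IsoA R × (K0 R × IsoA R) ≃ (IsoA R × IsoA R) × K0 R :=
    { toFun := fun i => ((i.1, i.2.2), i.2.1 + s i.1 i.2.2)
      invFun := fun j => (j.1.1, (j.2 - s j.1.1 j.1.2, j.1.2))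
      left_inv := fun i => by simp
      right_inv := fun j => by simp }
  have hb : ∀ i, triMap S ρ.rP ρ.rQ ρ.rf ρ.hfc ρ.hfcd (b i) = 
      qm S (S.mulD (Eelt S _ (ρ.hfc (Quot.out i.1).1 (Quot.out i.1).2))
        (S.mulD (S.KK (i.2.1, 0)) (Eelt S _ (ρ.hfcd (Quot.out i.2.2).1 (Quot.out i.2.2).2)))) := by
    rintro ⟨a, α, b'⟩
    simp only [b, Module.Basis.tensorProduct_apply, Finsupp.coe_basisSingleOne, triMap,
      TensorProduct.lift.tmul, Finsupp.lift_apply]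
    simp [Finsupp.sum_single_index]
    erw [Finsupp.lift_apply]
    refine (Finsupp.sum_single_index ?_).trans ?_
    · exact zero_smul ℂ _
    · exact one_smul ℂ _
  have ht : ∀ i, triMap S ρ.rP ρ.rQ ρ.rf ρ.hfc ρ.hfcd (b i) - c i.1 i.2.2 i.2.1 • WW S ρ (e i) ∈
      Submodule.span ℂ (WW S ρ '' {j | mW ρ j < mW ρ (e i)}) := fun i => by
    rw [hb]
    exact h i.1 i.2.2 i.2.1
  refine bijective_of_basis b _ ?_ ?_
  · exact tri_indep (WW S ρ) (WW_indep S ρ) (mW ρ) _ e _ (fun i => hc i.1 i.2.2 i.2.1) ht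
  · refine (WW_span S ρ).trans ?_
    rw [Submodule.span_le]
    rintro _ ⟨j, rfl⟩
    exact tri_span (WW S ρ) (mW ρ) _ e _ (fun i => hc i.1 i.2.2 i.2.1) ht (mW ρ j + 1) j (by omega)

end DHr

end helpers

theorem stmt15 (hH : Hereditary k R) (hc : CondC R) (hd : CondD R) (he : CondE R)
    (S : DHSetting k R)
    -- a fixed choice of projective resolution `0 → P_C → Q_C → C → 0` for each object
    (rP rQ : R → R) (rf : ∀ C : R, rP C ⟶ rQ C) (rπ : ∀ C : R, rQ C ⟶ C)
    (hres : ∀ C : R, IsFinHom R C → Projective (rP C) ∧ Projective (rQ C) ∧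
      ∃ w : rf C ≫ rπ C = 0, (ShortComplex.mk (rf C) (rπ C) w).ShortExact)
    (hfc : ∀ C : R, IsFinHom R C → FinCx R (Z2Cx.Cf R (rf C)))
    (hfcd : ∀ C : R, IsFinHom R C → FinCx R (Z2Cx.dagger R (Z2Cx.Cf R (rf C)))) :
    Function.Bijective (triMap S rP rQ rf hfc hfcd) := by
  exact triMap_bijective S (⟨rP, rQ, rf, rπ, hres, hfc, hfcd⟩ : ResData R)

end
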